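/- With C = u²v²w²μ⁹, let g₁ and g₂ be the k-automorphisms of K_C of order 2 determined by g₁(X) = −X, g₁(Y) = Y, g₁(T) = −T and g₂(X) = X, g₂(Y) = −Y, g₂(T) = −T, so that ⟨g₁, g₂⟩ ≅ C₂ × C₂. Then the fixed field of ⟨g₁, g₂⟩ acting on K_C is k-rational, although K_C itself is not k-rational. -/

import Mathlib

/-!
Rationality of the quotient. The invariants are generated by `x²`, `y²` and `τ = y t / x`. With
`η = i u v μ⁴`, so that `C = -w² μ η²`, and `n = x² + y² + η`, one has
`t² = μ (w² n (n - 2 η) - 4 v² x² y²)`. In the coordinates `p = (x² - y² + η) / n` and `q = τ / n`, both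
`x²` and `y²` are affine in `n`, and the relation `τ² x² = y² t²` divided by `n²` becomes linear in `n`.
Hence `x²`, `y²`, `τ` lie in `k(p, q)` (`parameters_recover`), which is therefore the whole fixed field
(`isKRational_fixedField`).

Non-rationality of `K`. After rescaling, the surface is
`t² = μ ((y² - α² x²)(y² - β² x²) + e²)` with `α β = 1`, so that
`μ (y² - α² x²)(y² - β² x²) = t² - μ e²` is a norm from the quadratic extension `k(√μ)`.

* If `K` were rational, unique factorization in a polynomial ring would show that
  `y² - α² x²` itself is a constant `κ` times a norm from `K(√μ)`: an inert prime divides it to even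
  order (`exists_norm_of_polynomial_fractions`). This is the vanishing of an unramified Brauer class.
* Such a representation in `K = k(x, y)(t)`, restricted to the generic line `y = m x`, represents the
  quartic `t² ∈ k(m)[x]` by the ternary form `⟨μ, c, -μ c⟩` over `k(m)(x)`, where `c` is a constant
  times `m² - α²` (`conic_not_norm`). By the Cassels–Pfister theorem (`cassels_pfister`) the
  representing vector may be taken to be `v₀ + v₁ x + v₂ x²` over `k(m)`, and the Gram determinant of
  `v₀, v₁, v₂` yields a point on the elliptic curve
  `S² = R (R² - 4 μ² e² (m² - α²)(m² - β²))` over `k(m)` such that `R c` is a norm from `k(m)(√μ)`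
  (`quartic_not_represented`).
* A descent via unique factorization in `k[m]` shows that no such point exists
  (`cubic_norm_contradiction`, `descent_contradiction`).
-/

/-- A field extension `K` of `k` (of transcendence degree 2) is *k-rational* if it is
isomorphic as a `k`-algebra to the field of rational functions in two variables over `k`. -/
def IsKRational (k : Type*) (K : Type*) [Field k] [Field K] [Algebra k K] : Prop :=
  Nonempty (K ≃ₐ[k] FractionRing (MvPolynomial (Fin 2) k))

section

open Polynomial

/-! ### Square classes in unique factorization domains -/

theorem exists_sq_mul_squarefree {R : Type*} [CommRing R] [IsDomain R]
    [UniqueFactorizationMonoid R] (a : R) (ha : a ≠ 0) :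
    ∃ s Q : R, a = s ^ 2 * Q ∧ Squarefree Q := by
  induction a using UniqueFactorizationMonoid.induction_on_prime with
  | h₁ => exact absurd rfl ha
  | h₂ x hx => exact ⟨1, x, by simp, hx.squarefree⟩
  | h₃ a p h0 hp ih =>
    obtain ⟨s, Q, h, hQ⟩ := ih h0
    by_cases hd : p ∣ Q
    · obtain ⟨Q', rfl⟩ := hd
      exact ⟨s * p, Q', by rw [h]; ring, hQ.of_mul_right⟩
    · refine ⟨s, p * Q, by rw [h]; ring, ?_⟩
      rw [squarefree_mul_iff]
      refine ⟨?_, hp.irreducible.squarefree, hQ⟩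
      exact (hp.irreducible.isRelPrime_iff_not_dvd).2 hd

theorem Squarefree.dvd_of_forall_prime {R : Type*} [CommRing R] [IsDomain R]
    [UniqueFactorizationMonoid R] (g Q : R) (hQ : Squarefree Q)
    (h : ∀ p, Prime p → p ∣ Q → p ∣ g) : Q ∣ g := by
  induction Q using UniqueFactorizationMonoid.induction_on_prime with
  | h₁ => exact absurd rfl hQ.ne_zero
  | h₂ x hx => exact hx.dvd
  | h₃ a p h0 hp ih =>
    rw [squarefree_mul_iff] at hQ
    exact hQ.1.mul_dvd (h p hp (dvd_mul_right _ _))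
      (ih hQ.2.2 fun q hq hqa => h q hq (hqa.mul_left _))

/-- A prime dividing the squarefree part of `s ^ 2 * Q` divides it to odd order. -/
theorem odd_multiplicity_of_dvd_squarefree {R : Type*} [CommRing R] [IsDomain R]
    [UniqueFactorizationMonoid R] {s Q p : R} (hs : s ≠ 0) (hQ : Squarefree Q) (hp : Prime p)
    (hd : p ∣ Q) : Odd (multiplicity p (s ^ 2 * Q)) := by
  have hf : ∀ z : R, z ≠ 0 → FiniteMultiplicity p z := fun z hz =>
    FiniteMultiplicity.of_prime_left hp hz
  have h1 : multiplicity p Q = 1 := by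
    refine multiplicity_eq_of_dvd_of_not_dvd (by simpa using hd) ?_
    intro h2
    exact hp.not_isUnit (hQ p (by simpa [pow_two] using h2))
  rw [multiplicity_mul hp (hf _ (mul_ne_zero (pow_ne_zero _ hs) hQ.ne_zero)), h1,
    (hf s hs).multiplicity_pow hp]
  exact ⟨_, rfl⟩

/-- In `S² = R (R² - h d⁴)`, a prime not dividing `h` divides `R` to even order. -/
theorem even_multiplicity_of_cubic {R : Type*} [CommRing R] [IsDomain R]
    [UniqueFactorizationMonoid R] {p S r h d : R} (hp : Prime p) (hr : r ≠ 0) (hd : d ≠ 0)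
    (hh : ¬ p ∣ h) (e : S ^ 2 = r * (r ^ 2 - h * d ^ 4)) : Even (multiplicity p r) := by
  have hf : ∀ z : R, z ≠ 0 → FiniteMultiplicity p z := fun z hz =>
    FiniteMultiplicity.of_prime_left hp hz
  have hh0 : h ≠ 0 := by rintro rfl; exact hh (dvd_zero _)
  have m1 : multiplicity p (r ^ 2) = 2 * multiplicity p r := (hf r hr).multiplicity_pow hp
  have m2 : multiplicity p (h * d ^ 4) = 4 * multiplicity p d := by
    rw [multiplicity_mul hp (hf _ (mul_ne_zero hh0 (pow_ne_zero _ hd))),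
      (hf d hd).multiplicity_pow hp, multiplicity_eq_zero.2 hh, zero_add]
  rcases lt_trichotomy (multiplicity p (r ^ 2)) (multiplicity p (h * d ^ 4)) with hlt | heq | hgt
  · have h3 : multiplicity p (r ^ 2 - h * d ^ 4) = multiplicity p (r ^ 2) := by
      rw [sub_eq_neg_add]
      exact (hf _ (pow_ne_zero _ hr)).multiplicity_add_of_gt (by rwa [multiplicity_neg])
    have h4 : r ^ 2 - h * d ^ 4 ≠ 0 := by
      intro h0; rw [sub_eq_zero.1 h0] at hlt; exact lt_irrefl _ hlt
    have hS : S ≠ 0 := by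
      rintro rfl
      rw [zero_pow two_ne_zero] at e
      exact mul_ne_zero hr h4 e.symm
    have h5 := congrArg (multiplicity p) e
    rw [(hf S hS).multiplicity_pow hp, multiplicity_mul hp (hf _ (mul_ne_zero hr h4)), h3, m1] at h5
    exact ⟨multiplicity p S - multiplicity p r, by omega⟩
  · exact ⟨multiplicity p d, by omega⟩
  · have h3 : multiplicity p (r ^ 2 - h * d ^ 4) = multiplicity p (h * d ^ 4) := by
      rw [sub_eq_add_neg, (FiniteMultiplicity.neg_iff.2 (hf _ (mul_ne_zero hh0 (pow_ne_zero _ hd)))).multiplicity_add_of_gt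
        (by rwa [multiplicity_neg]), multiplicity_neg]
    have h4 : r ^ 2 - h * d ^ 4 ≠ 0 := by
      intro h0; rw [sub_eq_zero.1 h0] at hgt; exact lt_irrefl _ hgt
    have hS : S ≠ 0 := by
      rintro rfl
      rw [zero_pow two_ne_zero] at e
      exact mul_ne_zero hr h4 e.symm
    have h5 := congrArg (multiplicity p) e
    rw [(hf S hS).multiplicity_pow hp, multiplicity_mul hp (hf _ (mul_ne_zero hr h4)), h3, m2] at h5
    exact ⟨multiplicity p S - 2 * multiplicity p d, by omega⟩

theorem exists_coprime_factor {k : Type*} [Field k] (a b : k[X]) (hb : b ≠ 0) :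
    ∃ h a' b' : k[X], h ≠ 0 ∧ a = h * a' ∧ b = h * b' ∧ IsCoprime a' b' := by
  classical
  have hg : EuclideanDomain.gcd a b ≠ 0 := fun h0 => hb (EuclideanDomain.gcd_eq_zero_iff.1 h0).2
  obtain ⟨a', ha⟩ := EuclideanDomain.gcd_dvd_left a b
  obtain ⟨b', hb'⟩ := EuclideanDomain.gcd_dvd_right a b
  have hbez := EuclideanDomain.gcd_eq_gcd_ab a b
  generalize EuclideanDomain.gcdA a b = r at hbez
  generalize EuclideanDomain.gcdB a b = s at hbez
  generalize EuclideanDomain.gcd a b = g at *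
  refine ⟨g, a', b', hg, ha, hb', r, s, ?_⟩
  apply mul_left_cancel₀ hg
  rw [mul_one]
  conv_rhs => rw [hbez, ha, hb']
  ring

theorem dvd_of_sq_dvd_squarefree_mul_sq {k : Type*} [Field k] {q s W : k[X]} (hq : Squarefree q)
    (hs : s ≠ 0) (h : s ^ 2 ∣ q * W ^ 2) : s ∣ W := by
  obtain ⟨g, W', s', hg, rfl, rfl, hc⟩ := exists_coprime_factor W s hs
  have h1 : s' ^ 2 ∣ q := by
    have : s' ^ 2 ∣ q * W' ^ 2 := by
      have h2 : g ^ 2 * s' ^ 2 ∣ g ^ 2 * (q * W' ^ 2) := by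
        convert h using 1 <;> ring
      exact (mul_dvd_mul_iff_left (pow_ne_zero 2 hg)).1 h2
    exact (IsCoprime.pow hc.symm).dvd_of_dvd_mul_right this
  have hu : IsUnit s' := hq s' (by simpa [pow_two] using h1)
  exact mul_dvd_mul_left g hu.dvd

/-- A squarefree polynomial all of whose prime factors divide the product of the irreducible
polynomials `l₁, …, l₄` is, up to a constant, a partial product of these. -/
theorem squarefree_eq_of_primes {k : Type*} [Field k] {Q l₁ l₂ l₃ l₄ : k[X]}
    (hQ : Squarefree Q) (h₁ : Irreducible l₁) (h₂ : Irreducible l₂) (h₃ : Irreducible l₃)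
    (h₄ : Irreducible l₄) (h : ∀ p, Prime p → p ∣ Q → p ∣ (l₁ * l₂) * (l₃ * l₄)) :
    ∃ ν : k, ν ≠ 0 ∧ ∃ e₁ e₂ e₃ e₄ : ℕ, (e₁ = 0 ∨ e₁ = 1) ∧ (e₂ = 0 ∨ e₂ = 1) ∧
      (e₃ = 0 ∨ e₃ = 1) ∧ (e₄ = 0 ∨ e₄ = 1) ∧
      Q = C ν * ((l₁ ^ e₁ * l₂ ^ e₂) * (l₃ ^ e₃ * l₄ ^ e₄)) := by
  have key : ∀ q l : k[X], Irreducible l → q ∣ l →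
      ∃ ν : k, ν ≠ 0 ∧ ∃ e : ℕ, (e = 0 ∨ e = 1) ∧ q = C ν * l ^ e := by
    intro q l hl hd
    obtain ⟨r, hr⟩ := hd
    rcases hl.isUnit_or_isUnit hr with hu | hu
    · obtain ⟨ν, hν, rfl⟩ := Polynomial.isUnit_iff.1 hu
      exact ⟨ν, hν.ne_zero, 0, Or.inl rfl, by simp⟩
    · obtain ⟨ν, hν, rfl⟩ := Polynomial.isUnit_iff.1 hu
      refine ⟨ν⁻¹, inv_ne_zero hν.ne_zero, 1, Or.inr rfl, ?_⟩
      rw [hr, pow_one, mul_left_comm, ← C_mul, inv_mul_cancel₀ hν.ne_zero, C_1, mul_one]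
  obtain ⟨q12, q34, h12, h34, rfl⟩ := exists_dvd_and_dvd_of_dvd_mul
    (hQ.dvd_of_forall_prime _ _ h)
  obtain ⟨q1, q2, hq1, hq2, rfl⟩ := exists_dvd_and_dvd_of_dvd_mul h12
  obtain ⟨q3, q4, hq3, hq4, rfl⟩ := exists_dvd_and_dvd_of_dvd_mul h34
  obtain ⟨ν1, n1, e1, z1, rfl⟩ := key _ _ h₁ hq1
  obtain ⟨ν2, n2, e2, z2, rfl⟩ := key _ _ h₂ hq2
  obtain ⟨ν3, n3, e3, z3, rfl⟩ := key _ _ h₃ hq3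
  obtain ⟨ν4, n4, e4, z4, rfl⟩ := key _ _ h₄ hq4
  refine ⟨ν1 * ν2 * ν3 * ν4, by simp [*], e1, e2, e3, e4, z1, z2, z3, z4, ?_⟩
  simp only [C_mul]; ring

/-! ### Descent on the cubic `S² = R (R² - 4 μ² e² (X² - α²)(X² - β²))` -/

/-- The leading coefficients of `μ c² M²` and `d² N²` cannot cancel, because `μ` is not a square;
hence `(X² - b) μ c² M² - (X² - a) d² N² - S` has even degree. -/
theorem natDegree_descent {k : Type*} [Field k] {μ a b c d D : k}
    (hμ : ¬ IsSquare μ) (hp : c ≠ 0) (hq : d ≠ 0) (M N S : k[X])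
    (hc : IsCoprime M N)
    (hS : S ^ 2 = C D * ((X ^ 2 - C b) * (C (μ * c ^ 2) * M ^ 2) ^ 2
      - (X ^ 2 - C a) * (C (d ^ 2) * N ^ 2) ^ 2)) :
    ∃ n : ℕ, ((X ^ 2 - C b) * (C (μ * c ^ 2) * M ^ 2)
      - (X ^ 2 - C a) * (C (d ^ 2) * N ^ 2) - S).natDegree = 2 * n + 2 := by
  set n := max M.natDegree N.natDegree with hn
  have hM : M.natDegree ≤ n := le_max_left _ _
  have hN : N.natDegree ≤ n := le_max_right _ _
  have hq2 : ∀ z : k, (X ^ 2 - C z : k[X]).natDegree ≤ 2 := fun z => by compute_degree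
  have hM2 : ∀ z : k, (C z * M ^ 2).natDegree ≤ 2 * n := fun z =>
    (natDegree_C_mul_le _ _).trans (natDegree_pow_le.trans (by omega))
  have hN2 : ∀ z : k, (C z * N ^ 2).natDegree ≤ 2 * n := fun z =>
    (natDegree_C_mul_le _ _).trans (natDegree_pow_le.trans (by omega))
  have hSd : S.natDegree ≤ 2 * n + 1 := by
    have h1 : (S ^ 2).natDegree ≤ 4 * n + 2 := by
      rw [hS]
      refine (natDegree_C_mul_le _ _).trans ((natDegree_sub_le _ _).trans (max_le ?_ ?_))
      · refine natDegree_mul_le.trans ?_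
        have h2 : ((C (μ * c ^ 2) * M ^ 2) ^ 2).natDegree ≤ 2 * (2 * n) :=
          natDegree_pow_le.trans (Nat.mul_le_mul_left _ (hM2 _))
        have := hq2 b
        omega
      · refine natDegree_mul_le.trans ?_
        have h2 : ((C (d ^ 2) * N ^ 2) ^ 2).natDegree ≤ 2 * (2 * n) :=
          natDegree_pow_le.trans (Nat.mul_le_mul_left _ (hN2 _))
        have := hq2 a
        omega
    rw [natDegree_pow] at h1
    omega
  have cf : ∀ (z e : k) (P : k[X]), P.natDegree ≤ n →
      ((X ^ 2 - C z) * (C e * P ^ 2)).coeff (2 * n + 2) = e * P.coeff n ^ 2 := by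
    intro z e P hP
    have hP2 : (P ^ 2).natDegree ≤ 2 * n := natDegree_pow_le.trans (by omega)
    rw [add_comm (2 * n) 2, coeff_mul_add_eq_of_natDegree_le (hq2 z)
      ((natDegree_C_mul_le _ _).trans hP2), coeff_C_mul, pow_two P, two_mul n,
      coeff_mul_add_eq_of_natDegree_le hP hP]
    simp [coeff_X_pow, pow_two, coeff_C]
  refine ⟨n, natDegree_eq_of_le_of_coeff_ne_zero ?_ ?_⟩
  · refine (natDegree_sub_le _ _).trans (max_le ((natDegree_sub_le _ _).trans (max_le ?_ ?_)) ?_)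
    · refine natDegree_mul_le.trans ?_
      have := hM2 (μ * c ^ 2); have := hq2 b; omega
    · refine natDegree_mul_le.trans ?_
      have := hN2 (d ^ 2); have := hq2 a; omega
    · omega
  · rw [coeff_sub, coeff_sub, cf _ _ _ hM, cf _ _ _ hN,
      coeff_eq_zero_of_natDegree_lt (p := S) (by omega), sub_zero]
    intro h0
    have hM0 : M.coeff n = 0 := by
      by_contra h
      apply hμ
      refine ⟨d * N.coeff n / (c * M.coeff n), ?_⟩
      field_simp
      linear_combination h0
    have hN0 : N.coeff n = 0 := by
      rw [hM0] at h0
      have : d ^ 2 * N.coeff n ^ 2 = 0 := by linear_combination -h0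
      simpa [hq] using this
    have hz : M = 0 ∧ N = 0 := by
      rcases max_choice M.natDegree N.natDegree with h | h
      · rw [← hn] at h
        have : M = 0 := by rw [h] at hM0; exact leadingCoeff_eq_zero.1 hM0
        refine ⟨this, ?_⟩
        rw [this] at h; simp at h
        have : N.natDegree = n := by omega
        rw [← this] at hN0; exact leadingCoeff_eq_zero.1 hN0
      · rw [← hn] at h
        have : N = 0 := by rw [h] at hN0; exact leadingCoeff_eq_zero.1 hN0
        refine ⟨?_, this⟩
        rw [this] at h; simp at h
        have : M.natDegree = n := by omega
        rw [← this] at hM0; exact leadingCoeff_eq_zero.1 hM0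
    rw [hz.1, hz.2] at hc
    exact not_isCoprime_zero_zero hc

/-- At a simple root `a` of `l P`, the vanishing of `N` would force `S`, and then `M`, to vanish
there as well. -/
theorem eval_ne_zero_of_simple_root {k : Type*} [Field k] {a : k} {l P Q M N S : k[X]}
    (hl : l = X - C a) (hP : P.eval a ≠ 0) (hc : IsCoprime M N)
    (h : S ^ 2 = l * P * M ^ 4 + Q * N ^ 4) : N.eval a ≠ 0 := by
  intro h0
  have hlp : Prime l := hl ▸ prime_X_sub_C a
  have hd : ∀ F : k[X], F.eval a = 0 → l ∣ F := fun F hF => hl ▸ dvd_iff_isRoot.2 hF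
  have hd' : ∀ F : k[X], l ∣ F → F.eval a = 0 := fun F hF => by
    subst hl; exact dvd_iff_isRoot.1 hF
  obtain ⟨N', rfl⟩ := hd N h0
  have hS : l ∣ S := by
    refine hlp.dvd_of_dvd_pow (n := 2) ?_
    rw [h]
    exact ⟨P * M ^ 4 + Q * l ^ 3 * N' ^ 4, by ring⟩
  obtain ⟨S', rfl⟩ := hS
  have h1 : l ∣ P * M ^ 4 := by
    refine ⟨S' ^ 2 - Q * l ^ 2 * N' ^ 4, ?_⟩
    apply mul_left_cancel₀ hlp.ne_zero
    linear_combination -h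
  rcases hlp.dvd_or_dvd h1 with h2 | h2
  · exact hP (hd' _ h2)
  · have h3 : l ∣ M := hlp.dvd_of_dvd_pow h2
    exact hlp.not_isUnit (hc.isUnit_of_dvd' h3 (dvd_mul_right _ _))

/-- The arithmetic heart of the non-rationality. Put `x = X² - β²`, `y = X² - α²`, `M' = μ c² M²`,
`N' = d² N²` and `Λ = x M' - y N' - S`, `Λ' = x M' - y N' + S`. The equation says
`Λ Λ' = x y (M' - N')²`, so `Λ` is a constant times a square times a partial product of the four
linear factors of `xy`. Its values at `α` and `β` then give two expressions of one square class
which differ by the factor `μ` up to squares, for every partial product of even degree. -/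
theorem descent_contradiction {k : Type*} [Field k] [CharZero k] {i μ α β c d D : k}
    (hi : i ^ 2 = -1) (hμ : ¬ IsSquare μ) (hαβ : α * β = 1) (hD : D = α ^ 2 - β ^ 2)
    (hD0 : D ≠ 0) (hp : c ≠ 0) (hq : d ≠ 0) (M N S : k[X]) (hc : IsCoprime M N)
    (hS : S ^ 2 = C D * ((X ^ 2 - C (β ^ 2)) * (C (μ * c ^ 2) * M ^ 2) ^ 2
      - (X ^ 2 - C (α ^ 2)) * (C (d ^ 2) * N ^ 2) ^ 2)) : False := by
  have hμ0 : μ ≠ 0 := by rintro rfl; exact hμ ⟨0, by simp⟩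
  have hα0 : α ≠ 0 := left_ne_zero_of_mul_eq_one hαβ
  have hβ0 : β ≠ 0 := right_ne_zero_of_mul_eq_one hαβ
  have hab : α - β ≠ 0 := fun h => hD0 (by rw [hD]; linear_combination (α + β) * h)
  have hab' : α + β ≠ 0 := fun h => hD0 (by rw [hD]; linear_combination (α - β) * h)
  have h2 : (2 : k) ≠ 0 := two_ne_zero
  obtain ⟨n₁, hn₁⟩ := natDegree_descent hμ hp hq M N S hc hS
  obtain ⟨n₂, hn₂⟩ := natDegree_descent hμ hp hq M N (-S) hc (by rw [neg_sq]; exact hS)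
  have hMα : M.eval α ≠ 0 := by
    refine eval_ne_zero_of_simple_root (S := S) (l := X - C α)
      (P := -(C D * (X + C α) * C (d ^ 2) ^ 2))
      (Q := C D * (X ^ 2 - C (β ^ 2)) * C (μ * c ^ 2) ^ 2) rfl ?_ hc.symm ?_
    · simp [hD0, hq, ← two_mul, hα0]
    · rw [hS]; simp only [C_pow]; ring
  have hNβ : N.eval β ≠ 0 := by
    refine eval_ne_zero_of_simple_root (S := S) (l := X - C β)
      (P := (C D * (X + C β) * C (μ * c ^ 2) ^ 2))
      (Q := -(C D * (X ^ 2 - C (α ^ 2)) * C (d ^ 2) ^ 2)) rfl ?_ hc ?_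
    · simp [hD0, hp, hμ0, ← two_mul, hβ0]
    · rw [hS]; simp only [C_pow]; ring
  obtain ⟨l₁, hl₁⟩ : ∃ l : k[X], l = X - C α := ⟨_, rfl⟩
  obtain ⟨l₂, hl₂⟩ : ∃ l : k[X], l = X - C (-α) := ⟨_, rfl⟩
  obtain ⟨l₃, hl₃⟩ : ∃ l : k[X], l = X - C β := ⟨_, rfl⟩
  obtain ⟨l₄, hl₄⟩ : ∃ l : k[X], l = X - C (-β) := ⟨_, rfl⟩
  have hx : (X ^ 2 - C (β ^ 2) : k[X]) = l₃ * l₄ := by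
    rw [hl₃, hl₄]; simp only [C_pow, C_neg]; ring
  have hy : (X ^ 2 - C (α ^ 2) : k[X]) = l₁ * l₂ := by
    rw [hl₁, hl₂]; simp only [C_pow, C_neg]; ring
  have hxy : l₃ * l₄ - l₁ * l₂ = C D := by
    rw [← hx, ← hy, hD]; simp only [C_sub, C_pow]; ring
  have ir : ∀ a : k, Irreducible (X - C a) := fun a => irreducible_X_sub_C a
  have hdl₁ : l₁.natDegree = 1 := by rw [hl₁]; exact natDegree_X_sub_C _
  have hdl₂ : l₂.natDegree = 1 := by rw [hl₂]; exact natDegree_X_sub_C _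
  have hdl₃ : l₃.natDegree = 1 := by rw [hl₃]; exact natDegree_X_sub_C _
  have hdl₄ : l₄.natDegree = 1 := by rw [hl₄]; exact natDegree_X_sub_C _
  have i₁ : Irreducible l₁ := hl₁ ▸ ir _
  have i₂ : Irreducible l₂ := hl₂ ▸ ir _
  have i₃ : Irreducible l₃ := hl₃ ▸ ir _
  have i₄ : Irreducible l₄ := hl₄ ▸ ir _
  rw [hx, hy] at hn₁ hn₂ hS
  obtain ⟨M', hM'⟩ : ∃ M' : k[X], M' = C (μ * c ^ 2) * M ^ 2 := ⟨_, rfl⟩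
  obtain ⟨N', hN'⟩ : ∃ N' : k[X], N' = C (d ^ 2) * N ^ 2 := ⟨_, rfl⟩
  rw [← hM', ← hN'] at hn₁ hn₂ hS
  have hcop : ∀ π : k[X], Prime π → π ∣ M' → π ∣ N' → False := by
    intro π hπ h1 h2
    have key : ∀ (a : k) (P : k[X]), a ≠ 0 → π ∣ C a * P ^ 2 → π ∣ P := by
      intro a P ha h
      rcases hπ.dvd_or_dvd h with h | h
      · exact absurd (isUnit_of_dvd_unit h (isUnit_C.2 ha.isUnit)) hπ.not_isUnit
      · exact hπ.dvd_of_dvd_pow h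
    exact hπ.not_isUnit (hc.isUnit_of_dvd' (key _ _ (by simp [hμ0, hp]) (hM' ▸ h1))
      (key _ _ (by simp [hq]) (hN' ▸ h2)))
  obtain ⟨Λ, hΛ⟩ : ∃ Λ : k[X], Λ = l₃ * l₄ * M' - l₁ * l₂ * N' - S := ⟨_, rfl⟩
  obtain ⟨Λ', hΛ'⟩ : ∃ Λ' : k[X], Λ' = l₃ * l₄ * M' - l₁ * l₂ * N' - (-S) := ⟨_, rfl⟩
  rw [← hΛ] at hn₁
  rw [← hΛ'] at hn₂
  have hΛ0 : Λ ≠ 0 := by rintro h; rw [h] at hn₁; simp at hn₁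
  have hΛ'0 : Λ' ≠ 0 := by rintro h; rw [h] at hn₂; simp at hn₂
  have hprod : Λ * Λ' = (l₁ * l₂) * (l₃ * l₄) * (M' - N') ^ 2 := by
    rw [hΛ, hΛ']
    rw [← hxy] at hS
    linear_combination -hS
  have hW0 : M' - N' ≠ 0 := by
    intro h; rw [h] at hprod; simp [hΛ0, hΛ'0] at hprod
  obtain ⟨s, Q, hsQ, hQ⟩ := exists_sq_mul_squarefree Λ hΛ0
  have hs0 : s ≠ 0 := by rintro rfl; apply hΛ0; rw [hsQ]; ring
  have hprimes : ∀ π, Prime π → π ∣ Q → π ∣ (l₁ * l₂) * (l₃ * l₄) := by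
    intro π hπ hd
    by_contra hnd
    have hodd := odd_multiplicity_of_dvd_squarefree hs0 hQ hπ hd
    rw [← hsQ] at hodd
    have hf : ∀ z : k[X], z ≠ 0 → FiniteMultiplicity π z := fun z hz =>
      FiniteMultiplicity.of_prime_left hπ hz
    have hm := congrArg (multiplicity π) hprod
    rw [multiplicity_mul hπ (hf _ (mul_ne_zero hΛ0 hΛ'0)), multiplicity_mul hπ
      (hf _ (hprod ▸ mul_ne_zero hΛ0 hΛ'0)), multiplicity_eq_zero.2 hnd,
      (hf _ hW0).multiplicity_pow hπ] at hm
    have hdΛ : π ∣ Λ := by rw [hsQ]; exact hd.mul_left _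
    have hdΛ' : π ∣ Λ' := by
      by_contra h
      rw [multiplicity_eq_zero.2 h] at hm
      obtain ⟨j, hj⟩ := hodd
      omega
    have hdW : π ∣ M' - N' := by
      have : π ∣ (l₁ * l₂) * (l₃ * l₄) * (M' - N') ^ 2 := hprod ▸ hdΛ.mul_right _
      exact hπ.dvd_of_dvd_pow ((hπ.dvd_or_dvd this).resolve_left hnd)
    have hdM : π ∣ C (2 * D) * M' := by
      have h3 : C (2 * D) * M' = Λ + Λ' - 2 * (l₁ * l₂) * (M' - N') := by
        rw [C_mul, ← hxy, hΛ, hΛ', show (C (2 : k) : k[X]) = 2 from rfl]; ring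
      rw [h3]
      exact dvd_sub (dvd_add hdΛ hdΛ') (hdW.mul_left _)
    have hdM' : π ∣ M' := by
      rcases hπ.dvd_or_dvd hdM with h | h
      · exact absurd (isUnit_of_dvd_unit h (isUnit_C.2 (by simp [hD0]))) hπ.not_isUnit
      · exact h
    exact hcop π hπ hdM' (by simpa using dvd_sub hdM' hdW)
  obtain ⟨ν, hν, e₁, e₂, e₃, e₄, z₁, z₂, z₃, z₄, hQe⟩ :=
    squarefree_eq_of_primes hQ i₁ i₂ i₃ i₄ hprimes
  have heven : Even (e₁ + e₂ + e₃ + e₄) := by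
    have h3 := congrArg natDegree hsQ
    rw [hn₁, natDegree_mul (pow_ne_zero _ hs0) hQ.ne_zero, natDegree_pow, hQe,
      natDegree_C_mul hν, natDegree_mul (mul_ne_zero (pow_ne_zero _ i₁.ne_zero)
      (pow_ne_zero _ i₂.ne_zero)) (mul_ne_zero (pow_ne_zero _ i₃.ne_zero)
      (pow_ne_zero _ i₄.ne_zero)), natDegree_mul (pow_ne_zero _ i₁.ne_zero)
      (pow_ne_zero _ i₂.ne_zero), natDegree_mul (pow_ne_zero _ i₃.ne_zero)
      (pow_ne_zero _ i₄.ne_zero)] at h3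
    simp only [natDegree_pow, hdl₁, hdl₂, hdl₃, hdl₄, mul_one] at h3
    exact ⟨n₁ + 1 - s.natDegree, by omega⟩
  obtain ⟨P, hP⟩ : ∃ P : k[X], P = (l₁ ^ e₁ * l₂ ^ e₂) * (l₃ ^ e₃ * l₄ ^ e₄) := ⟨_, rfl⟩
  obtain ⟨P', hP'⟩ : ∃ P' : k[X],
    P' = (l₁ ^ (1 - e₁) * l₂ ^ (1 - e₂)) * (l₃ ^ (1 - e₃) * l₄ ^ (1 - e₄)) := ⟨_, rfl⟩
  have hPP : P * P' = (l₁ * l₂) * (l₃ * l₄) := by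
    have aux : ∀ (l : k[X]) (e : ℕ), (e = 0 ∨ e = 1) → l ^ e * l ^ (1 - e) = l := by
      rintro l e (rfl | rfl) <;> simp
    rw [hP, hP']
    linear_combination (l₂ ^ e₂ * l₂ ^ (1 - e₂) * (l₃ ^ e₃ * l₃ ^ (1 - e₃)) *
      (l₄ ^ e₄ * l₄ ^ (1 - e₄))) * aux l₁ e₁ z₁ + l₁ * (l₃ ^ e₃ * l₃ ^ (1 - e₃)) *
      (l₄ ^ e₄ * l₄ ^ (1 - e₄)) * aux l₂ e₂ z₂ + l₁ * l₂ * (l₄ ^ e₄ * l₄ ^ (1 - e₄)) *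
      aux l₃ e₃ z₃ + l₁ * l₂ * l₃ * aux l₄ e₄ z₄
  rw [← hP] at hQe
  have hΛP : Λ = C ν * P * s ^ 2 := by rw [hsQ, hQe]; ring
  have hP0 : P ≠ 0 := by rintro h; apply hΛ0; rw [hΛP, h]; ring
  have hsq : s ^ 2 * (C ν * Λ') = P' * (M' - N') ^ 2 := by
    apply mul_left_cancel₀ hP0
    rw [← mul_assoc P P', hPP, ← hprod, hΛP]; ring
  have hP'sq : Squarefree P' := by
    have hsep : Squarefree ((l₁ * l₂) * (l₃ * l₄)) := by
      have rp : ∀ a b : k, a - b ≠ 0 → IsRelPrime (X - C a) (X - C b) := fun a b h =>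
        (isCoprime_X_sub_C_of_isUnit_sub h.isUnit).isRelPrime
      have r12 : IsRelPrime l₁ l₂ := hl₁ ▸ hl₂ ▸ rp _ _ (by simpa [← two_mul] using hα0)
      have r34 : IsRelPrime l₃ l₄ := hl₃ ▸ hl₄ ▸ rp _ _ (by simpa [← two_mul] using hβ0)
      have r13 : IsRelPrime l₁ l₃ := hl₁ ▸ hl₃ ▸ rp _ _ hab
      have r14 : IsRelPrime l₁ l₄ := hl₁ ▸ hl₄ ▸ rp _ _ (by simpa using hab')
      have r23 : IsRelPrime l₂ l₃ := hl₂ ▸ hl₃ ▸ rp _ _ (by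
        intro h; exact hab' (by linear_combination -h))
      have r24 : IsRelPrime l₂ l₄ := hl₂ ▸ hl₄ ▸ rp _ _ (by
        intro h; exact hab (by linear_combination -h))
      rw [squarefree_mul_iff, squarefree_mul_iff, squarefree_mul_iff]
      exact ⟨(r13.mul_right r14).mul_left (r23.mul_right r24), ⟨r12, i₁.squarefree, i₂.squarefree⟩,
        r34, i₃.squarefree, i₄.squarefree⟩
    rw [← hPP] at hsep
    exact hsep.of_mul_right
  obtain ⟨W, hW⟩ := dvd_of_sq_dvd_squarefree_mul_sq hP'sq hs0 ⟨_, hsq.symm⟩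
  have hΛ'P : C ν * Λ' = P' * W ^ 2 := by
    apply mul_left_cancel₀ (pow_ne_zero 2 hs0)
    rw [hsq, hW]; ring
  -- at a root `a` of `xy`, one of `Λ`, `Λ'` vanishes and the other takes a known value
  have keyα : ∀ (a z : k), z ≠ 0 → Λ.eval a + Λ'.eval a = z → Λ.eval a * Λ'.eval a = 0 →
      (P.eval a = 0 → ∃ r, r ≠ 0 ∧ ν * z = P'.eval a * r ^ 2) ∧
      (P'.eval a = 0 → ∃ r, r ≠ 0 ∧ ν * z = P.eval a * r ^ 2) := by
    intro a z hz hadd hmul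
    have e1 : Λ.eval a = ν * P.eval a * s.eval a ^ 2 := by rw [hΛP]; simp
    have e2 : ν * Λ'.eval a = P'.eval a * W.eval a ^ 2 := by
      have := congrArg (eval a) hΛ'P
      simpa using this
    constructor
    · intro h0
      have h1 : ν * z = P'.eval a * W.eval a ^ 2 := by rw [← e2, ← hadd, e1, h0]; ring
      refine ⟨W.eval a, ?_, h1⟩
      intro h; rw [h] at h1; exact mul_ne_zero hν hz (by rw [h1]; ring)
    · intro h0
      have h3 : Λ'.eval a = 0 := by
        rw [h0, zero_mul] at e2
        exact (mul_eq_zero.1 e2).resolve_left hν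
      have h1 : ν * z = P.eval a * (ν * s.eval a) ^ 2 := by rw [← hadd, h3, e1]; ring
      refine ⟨ν * s.eval a, ?_, h1⟩
      intro h; rw [h] at h1; exact mul_ne_zero hν hz (by rw [h1]; ring)
  have vα := keyα α (2 * D * (μ * (c * M.eval α) ^ 2)) (by simp [hD0, hμ0, hp, hMα])
    (by rw [hΛ, hΛ', hl₁, hl₂, hl₃, hl₄, hM', hD]; simp; ring)
    (by rw [← eval_mul, hprod, hl₁]; simp)
  have vβ := keyα β (2 * D * (d * N.eval β) ^ 2) (by simp [hD0, hq, hNβ])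
    (by rw [hΛ, hΛ', hl₁, hl₂, hl₃, hl₄, hN', hD]; simp; ring)
    (by rw [← eval_mul, hprod, hl₃]; simp)
  -- equal square classes of the two values make `μ` a square
  have fin : ∀ a b ρ : k, a = b * ρ ^ 2 →
      (∃ r, r ≠ 0 ∧ ν * (2 * D * (μ * (c * M.eval α) ^ 2)) = a * r ^ 2) →
      (∃ r, r ≠ 0 ∧ ν * (2 * D * (d * N.eval β) ^ 2) = b * r ^ 2) → False := by
    rintro a b ρ rfl ⟨r, hr, h1⟩ ⟨r', hr', h2'⟩
    have hb : b ≠ 0 := by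
      rintro rfl
      exact mul_ne_zero hν (mul_ne_zero (mul_ne_zero h2 hD0)
        (pow_ne_zero 2 (mul_ne_zero hq hNβ))) (by rw [h2']; ring)
    apply hμ
    refine ⟨d * N.eval β * ρ * r / (r' * (c * M.eval α)), ?_⟩
    field_simp
    have h3 : ν * 2 * D * b * (μ * r' ^ 2 * c ^ 2 * M.eval α ^ 2
        - d ^ 2 * N.eval β ^ 2 * ρ ^ 2 * r ^ 2) = 0 := by
      linear_combination b * r' ^ 2 * h1 - b * ρ ^ 2 * r ^ 2 * h2'
    have h4 := (mul_eq_zero.1 h3).resolve_left (by simp [hν, hD0, hb])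
    linear_combination h4
  have ev : ∀ a, P.eval a = ((a - α) ^ e₁ * (a + α) ^ e₂) * ((a - β) ^ e₃ * (a + β) ^ e₄) := by
    intro a; rw [hP, hl₁, hl₂, hl₃, hl₄]; simp
  have ev' : ∀ a, P'.eval a = ((a - α) ^ (1 - e₁) * (a + α) ^ (1 - e₂)) *
      ((a - β) ^ (1 - e₃) * (a + β) ^ (1 - e₄)) := by
    intro a; rw [hP', hl₁, hl₂, hl₃, hl₄]; simp
  rw [ev, ev'] at vα vβ
  -- The eight partial products of even degree. In each of them the relevant values at `α` and `β`
  -- have a square quotient, thanks to `α β = 1` and `i² = -1`.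
  rcases z₁ with rfl | rfl <;> rcases z₂ with rfl | rfl <;> rcases z₃ with rfl | rfl <;>
    rcases z₄ with rfl | rfl <;> first | (exfalso; revert heven; decide) | skip
  · exact fin _ _ 1 (by ring) (vα.2 (by simp)) (vβ.2 (by simp))
  · exact fin _ _ i (by rw [hi]; ring) (vα.2 (by simp)) (vβ.1 (by simp))
  · exact fin _ _ α (by linear_combination (-2 * α * (α + β)) * hαβ) (vα.2 (by simp)) (vβ.2 (by simp))
  · exact fin _ _ (i * α) (by rw [mul_pow, hi]; linear_combination (-2 * α * (α - β)) * hαβ)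
      (vα.2 (by simp)) (vβ.1 (by simp))
  · exact fin _ _ (i * α) (by rw [mul_pow, hi]; linear_combination (-2 * α * (α - β)) * hαβ)
      (vα.1 (by simp)) (vβ.2 (by simp))
  · exact fin _ _ α (by linear_combination (-2 * α * (α + β)) * hαβ) (vα.1 (by simp)) (vβ.1 (by simp))
  · exact fin _ _ i (by rw [hi]; ring) (vα.1 (by simp)) (vβ.2 (by simp))
  · exact fin _ _ 1 (by ring) (vα.1 (by simp)) (vβ.1 (by simp))

/-- A linear polynomial is inert in `k(√μ)[X]`, so it divides a norm to even order. -/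
theorem eval_eq_zero_of_norm {k : Type*} [Field k] {μ a : k} (hμ : ¬ IsSquare μ)
    (P z A B : k[X]) (hz : z ≠ 0) (h : (X - C a) * P * z ^ 2 = A ^ 2 - C μ * B ^ 2) :
    P.eval a = 0 := by
  induction hn : z.natDegree using Nat.strong_induction_on generalizing z A B with
  | _ n ih =>
  by_contra hP
  have hl : Prime (X - C a) := prime_X_sub_C a
  have h1 : A.eval a ^ 2 = μ * B.eval a ^ 2 := by
    have := congrArg (eval a) h
    simp at this
    linear_combination -this
  have hB0 : B.eval a = 0 := by
    by_contra hB
    exact hμ ⟨A.eval a / B.eval a, by field_simp; linear_combination -h1⟩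
  have hA0 : A.eval a = 0 := by
    rw [hB0] at h1; simpa using h1
  obtain ⟨A', rfl⟩ := dvd_iff_isRoot.2 hA0
  obtain ⟨B', rfl⟩ := dvd_iff_isRoot.2 hB0
  have h2 : P * z ^ 2 = (X - C a) * (A' ^ 2 - C μ * B' ^ 2) := by
    apply mul_left_cancel₀ hl.ne_zero
    linear_combination h
  have h3 : (X - C a) ∣ z := by
    rcases hl.dvd_or_dvd ⟨_, h2⟩ with h3 | h3
    · exact absurd (dvd_iff_isRoot.1 h3) hP
    · exact hl.dvd_of_dvd_pow h3
  obtain ⟨z', rfl⟩ := h3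
  have hz' : z' ≠ 0 := right_ne_zero_of_mul hz
  refine hP (ih z'.natDegree ?_ z' A' B' hz' ?_ rfl)
  · rw [natDegree_mul hl.ne_zero hz', natDegree_X_sub_C] at hn
    omega
  · apply mul_left_cancel₀ hl.ne_zero
    linear_combination h2

/-- A point of the cubic whose abscissa `R` makes `κ R (X² - α²)` a norm from `k(√μ)` has
`R = ν (X² - α²) s²`: only the four linear factors can occur to odd order in `R`, and the norm
condition selects `X ± α`. Dividing out leads to the equation of `descent_contradiction`. -/
theorem cubic_norm_contradiction {k : Type*} [Field k] [CharZero k] {i μ α β e ε κ D : k}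
    (hi : i ^ 2 = -1) (hμ : ¬ IsSquare μ) (hαβ : α * β = 1) (hD : D = α ^ 2 - β ^ 2)
    (hD0 : D ≠ 0) (hε : ε ≠ 0) (he : 2 * e = ε ^ 2 * D) (hκ : κ ≠ 0)
    (R S d E A B : k[X]) (hR : R ≠ 0) (hd : d ≠ 0) (hE : E ≠ 0)
    (hS : S ^ 2 = R * (R ^ 2 - C (4 * μ ^ 2 * e ^ 2) *
      ((X ^ 2 - C (α ^ 2)) * (X ^ 2 - C (β ^ 2))) * d ^ 4))
    (hN : R * C κ * (X ^ 2 - C (α ^ 2)) * E ^ 2 = A ^ 2 - C μ * B ^ 2) : False := by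
  have hμ0 : μ ≠ 0 := by rintro rfl; exact hμ ⟨0, by simp⟩
  have hα0 : α ≠ 0 := left_ne_zero_of_mul_eq_one hαβ
  have hβ0 : β ≠ 0 := right_ne_zero_of_mul_eq_one hαβ
  have hab : α - β ≠ 0 := fun h => hD0 (by rw [hD]; linear_combination (α + β) * h)
  have hab' : α + β ≠ 0 := fun h => hD0 (by rw [hD]; linear_combination (α - β) * h)
  have h2 : (2 : k) ≠ 0 := two_ne_zero
  have he0 : e ≠ 0 := by
    rintro rfl
    exact mul_ne_zero (pow_ne_zero 2 hε) hD0 (by rw [← he]; ring)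
  have hi0 : i ≠ 0 := by rintro rfl; simp at hi
  obtain ⟨s, Q, hsQ, hQ⟩ := exists_sq_mul_squarefree R hR
  have hs0 : s ≠ 0 := by rintro rfl; apply hR; rw [hsQ]; ring
  have hx : (X ^ 2 - C (β ^ 2) : k[X]) = (X - C β) * (X - C (-β)) := by
    simp only [C_pow, C_neg]; ring
  have hy : (X ^ 2 - C (α ^ 2) : k[X]) = (X - C α) * (X - C (-α)) := by
    simp only [C_pow, C_neg]; ring
  have ir : ∀ a : k, Irreducible (X - C a) := fun a => irreducible_X_sub_C a
  obtain ⟨ν, hν, e₁, e₂, e₃, e₄, z₁, z₂, z₃, z₄, hQe⟩ :=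
    squarefree_eq_of_primes hQ (ir α) (ir (-α)) (ir β) (ir (-β)) (by
      intro π hπ hdvd
      by_contra hnd
      have hodd := odd_multiplicity_of_dvd_squarefree hs0 hQ hπ hdvd
      rw [← hsQ] at hodd
      refine (Nat.not_even_iff_odd.2 hodd) (even_multiplicity_of_cubic hπ hR hd ?_ hS)
      intro hdv
      rcases hπ.dvd_or_dvd hdv with h | h
      · exact absurd (isUnit_of_dvd_unit h (isUnit_C.2 (by simp [hμ0, he0]))) hπ.not_isUnit
      · exact hnd (by rwa [hx, hy] at h))
  rw [hsQ, hQe, hy] at hN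
  have n₁ : e₁ = 1 := by
    refine z₁.resolve_left ?_
    rintro rfl
    have := eval_eq_zero_of_norm (a := α) hμ (C ν * C κ * (X - C (-α)) * ((X - C (-α)) ^ e₂ *
      ((X - C β) ^ e₃ * (X - C (-β)) ^ e₄))) (s * E) A B (mul_ne_zero hs0 hE)
      (by rw [← hN]; ring)
    simp [hν, hκ, hα0, hab, hab', ← two_mul] at this
  have n₂ : e₂ = 1 := by
    refine z₂.resolve_left ?_
    rintro rfl
    have := eval_eq_zero_of_norm (a := -α) hμ (C ν * C κ * (X - C α) * ((X - C α) ^ e₁ *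
      ((X - C β) ^ e₃ * (X - C (-β)) ^ e₄))) (s * E) A B (mul_ne_zero hs0 hE)
      (by rw [← hN]; ring)
    have q1 : -α - α ≠ 0 := fun h => hα0 (by linear_combination -h / 2)
    have q2 : -α - β ≠ 0 := fun h => hab' (by linear_combination -h)
    have q3 : -α + β ≠ 0 := fun h => hab (by linear_combination -h)
    simp [hν, hκ, q1, q2, q3] at this
  subst n₁ n₂
  have q0 : β - α ≠ 0 := fun h => hab (by linear_combination -h)
  have q1 : β + α ≠ 0 := fun h => hab' (by linear_combination h)
  have q2 : -β - β ≠ 0 := fun h => hβ0 (by linear_combination -h / 2)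
  have q3 : -β - α ≠ 0 := fun h => hab' (by linear_combination -h)
  have q4 : -β + α ≠ 0 := fun h => hab (by linear_combination h)
  have n₃ : e₃ = 0 := by
    refine z₃.resolve_right ?_
    rintro rfl
    have := eval_eq_zero_of_norm (a := β) hμ (C ν * C κ * ((X - C α) * (X - C (-α))) ^ 2 *
      (X - C (-β)) ^ e₄) (s * E) A B (mul_ne_zero hs0 hE)
      (by rw [← hN]; ring)
    simp [hν, hκ, hβ0, q0, q1, ← two_mul] at this
  have n₄ : e₄ = 0 := by
    refine z₄.resolve_right ?_
    rintro rfl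
    have := eval_eq_zero_of_norm (a := -β) hμ (C ν * C κ * ((X - C α) * (X - C (-α))) ^ 2 *
      (X - C β) ^ e₃) (s * E) A B (mul_ne_zero hs0 hE)
      (by rw [← hN]; ring)
    simp [hν, hκ, q2, q3, q4] at this
  subst n₃ n₄
  obtain ⟨y, hy'⟩ : ∃ y : k[X], y = X ^ 2 - C (α ^ 2) := ⟨_, rfl⟩
  obtain ⟨x, hx'⟩ : ∃ x : k[X], x = X ^ 2 - C (β ^ 2) := ⟨_, rfl⟩
  have hy0 : y ≠ 0 := by
    rw [hy', hy]; exact mul_ne_zero (ir _).ne_zero (ir _).ne_zero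
  have hRy : R = C ν * y * s ^ 2 := by rw [hsQ, hQe, hy', hy]; ring
  rw [← hy', ← hx', hRy] at hS
  have hdvd : y * s ∣ S := by
    have : (y * s) ^ 2 ∣ S ^ 2 := by
      rw [hS]
      exact ⟨C ν * (C ν ^ 2 * y * s ^ 4 - C (4 * μ ^ 2 * e ^ 2) * x * d ^ 4), by ring⟩
    exact (IsIntegrallyClosed.pow_dvd_pow_iff two_ne_zero).1 this
  obtain ⟨S₂, rfl⟩ := hdvd
  have hS2 : S₂ ^ 2 = C ν * (C ν ^ 2 * y * s ^ 4 - C (4 * μ ^ 2 * e ^ 2) * x * d ^ 4) := by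
    apply mul_left_cancel₀ (pow_ne_zero 2 (mul_ne_zero hy0 hs0))
    linear_combination hS
  obtain ⟨g, N, M, hg, rfl, rfl, hc⟩ := exists_coprime_factor s d hd
  have hdvd : g ^ 2 ∣ S₂ := by
    have : (g ^ 2) ^ 2 ∣ S₂ ^ 2 := by
      rw [hS2]
      exact ⟨C ν * (C ν ^ 2 * y * N ^ 4 - C (4 * μ ^ 2 * e ^ 2) * x * M ^ 4), by ring⟩
    exact (IsIntegrallyClosed.pow_dvd_pow_iff two_ne_zero).1 this
  obtain ⟨S₃, rfl⟩ := hdvd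
  have hS3 : S₃ ^ 2 = C ν * (C ν ^ 2 * y * N ^ 4 - C (4 * μ ^ 2 * e ^ 2) * x * M ^ 4) := by
    apply mul_left_cancel₀ (pow_ne_zero 4 hg)
    linear_combination hS2
  have hMα : M.eval α ≠ 0 := by
    refine eval_ne_zero_of_simple_root (S := S₃) (l := X - C α)
      (P := C ν ^ 3 * (X - C (-α))) (Q := - (C ν * C (4 * μ ^ 2 * e ^ 2) * x)) rfl ?_ hc ?_
    · simp [hν, ← two_mul, hα0]
    · rw [hS3, hy', hy]; ring
  -- Evaluating at `α` shows that `ν` lies in the square class of `D`.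
  have hev : S₃.eval α ^ 2 = -(4 * ν * μ ^ 2 * e ^ 2 * D * M.eval α ^ 4) := by
    have := congrArg (eval α) hS3
    rw [hx', hy'] at this
    simp at this
    rw [this, hD]; ring
  obtain ⟨c, hcdef⟩ : ∃ c, c = i * S₃.eval α / (2 * μ * e * D * M.eval α ^ 2) := ⟨_, rfl⟩
  have hνc : ν = D * c ^ 2 := by
    rw [hcdef]; field_simp; rw [hi, hev]; ring
  have hc0 : c ≠ 0 := by rintro rfl; apply hν; rw [hνc]; ring
  refine descent_contradiction (c := ε) (d := c) hi hμ hαβ hD hD0 hε hc0 M N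
    (C ((D * c * i)⁻¹) * S₃) hc.symm ?_
  have hDci : D * c * i ≠ 0 := by simp [hD0, hc0, hi0]
  have hC : (C (D * c * i) : k[X]) ≠ 0 := by simpa using ⟨⟨hD0, hc0⟩, hi0⟩
  apply mul_left_cancel₀ (pow_ne_zero 2 hC)
  have h3 : C (D * c * i) ^ 2 * (C ((D * c * i)⁻¹) * S₃) ^ 2 = S₃ ^ 2 := by
    rw [mul_pow, ← mul_assoc, ← mul_pow, ← C_mul, mul_inv_cancel₀ hDci]; simp
  rw [h3, hS3, ← hx', ← hy', hνc]
  have h4 : C (4 * μ ^ 2 * e ^ 2) = C (μ ^ 2 * (ε ^ 2 * D) ^ 2) := by rw [← he]; congr 1; ring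
  have h5 : (C (i ^ 2) : k[X]) = -1 := by rw [hi]; simp
  rw [h4]
  simp only [C_mul, C_pow] at h5 ⊢
  linear_combination (-(C D ^ 3 * C c ^ 2 * (x * C μ ^ 2 * C ε ^ 4 * M ^ 4 - y * C c ^ 4 * N ^ 4))) * h5

/-! ### The Cassels–Pfister theorem for the form `⟨m, c, -mc⟩` -/

/-- The ternary quadratic form `m a² + c (b² - m d²)`. -/
def ternary {R : Type*} [CommRing R] (m c a b d : R) : R := m * a ^ 2 + c * (b ^ 2 - m * d ^ 2)

theorem ternary_natDegree_le {L : Type*} [Field L] {m c : L}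
    (han : ∀ a b d : L, ternary m c a b d = 0 → a = 0 ∧ b = 0 ∧ d = 0)
    {P Q R : L[X]} {j : ℕ} (h : (ternary (C m) (C c) P Q R).natDegree ≤ 2 * j) :
    P.natDegree ≤ j ∧ Q.natDegree ≤ j ∧ R.natDegree ≤ j := by
  set n := max P.natDegree (max Q.natDegree R.natDegree) with hn
  have hP : P.natDegree ≤ n := le_max_left _ _
  have hQ : Q.natDegree ≤ n := (le_max_left _ _).trans (le_max_right _ _)
  have hR : R.natDegree ≤ n := (le_max_right _ _).trans (le_max_right _ _)
  suffices n ≤ j by omega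
  by_contra hlt
  push Not at hlt
  have h0 : (ternary (C m) (C c) P Q R).coeff (n + n) = 0 :=
    coeff_eq_zero_of_natDegree_lt (by omega)
  have h1 : ternary m c (P.coeff n) (Q.coeff n) (R.coeff n) = 0 := by
    rw [← h0]
    simp only [ternary, coeff_add, coeff_C_mul, coeff_sub, pow_two,
      coeff_mul_add_eq_of_natDegree_le hP hP, coeff_mul_add_eq_of_natDegree_le hQ hQ,
      coeff_mul_add_eq_of_natDegree_le hR hR]
  obtain ⟨p0, q0, r0⟩ := han _ _ _ h1
  have key : ∀ T : L[X], T.natDegree = n → T.coeff n = 0 → False := by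
    intro T hT h0
    rw [← hT] at h0
    rw [leadingCoeff_eq_zero.1 h0] at hT
    simp at hT
    omega
  rcases max_choice P.natDegree (max Q.natDegree R.natDegree) with h | h
  · exact key P (by omega) p0
  · rcases max_choice Q.natDegree R.natDegree with h' | h'
    · exact key Q (by omega) q0
    · exact key R (by omega) r0

theorem ternary_eq_zero {L : Type*} [Field L] {m c : L}
    (han : ∀ a b d : L, ternary m c a b d = 0 → a = 0 ∧ b = 0 ∧ d = 0)
    {P Q R : L[X]} (h : ternary (C m) (C c) P Q R = 0) : P = 0 ∧ Q = 0 ∧ R = 0 := by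
  obtain ⟨hP, hQ, hR⟩ := ternary_natDegree_le han (P := P) (Q := Q) (R := R) (j := 0)
    (by rw [h]; simp)
  rw [natDegree_le_iff_degree_le] at hP hQ hR
  rw [eq_C_of_degree_le_zero hP, eq_C_of_degree_le_zero hQ, eq_C_of_degree_le_zero hR] at h ⊢
  have h1 : ternary m c (P.coeff 0) (Q.coeff 0) (R.coeff 0) = 0 := by
    have := congrArg (eval 0) h
    simpa [ternary] using this
  obtain ⟨p0, q0, r0⟩ := han _ _ _ h1
  simp [p0, q0, r0]

/-- Cassels–Pfister: a polynomial represented by an anisotropic form over `L(X)` is represented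
over `L[X]`. The denominator `D` is lowered by reflecting at the polynomial part of `V / D`. -/
theorem cassels_pfister {L : Type*} [Field L] {m c : L}
    (han : ∀ a b d : L, ternary m c a b d = 0 → a = 0 ∧ b = 0 ∧ d = 0)
    (F D V₁ V₂ V₃ : L[X]) (hD : D ≠ 0) (h : F * D ^ 2 = ternary (C m) (C c) V₁ V₂ V₃) :
    ∃ P Q R : L[X], F = ternary (C m) (C c) P Q R := by
  induction hn : D.natDegree using Nat.strong_induction_on generalizing D V₁ V₂ V₃ with
  | _ n ih =>
  have dm : ∀ V : L[X], ∃ q r : L[X], V = D * q + r ∧ r.degree < D.degree := fun V =>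
    ⟨V / D, V % D, (EuclideanDomain.div_add_mod V D).symm, degree_mod_lt _ hD⟩
  obtain ⟨y₁, r₁, hV₁, hr₁⟩ := dm V₁
  obtain ⟨y₂, r₂, hV₂, hr₂⟩ := dm V₂
  obtain ⟨y₃, r₃, hV₃, hr₃⟩ := dm V₃
  by_cases hr : r₁ = 0 ∧ r₂ = 0 ∧ r₃ = 0
  · obtain ⟨rfl, rfl, rfl⟩ := hr
    refine ⟨y₁, y₂, y₃, ?_⟩
    apply mul_right_cancel₀ (pow_ne_zero 2 hD)
    rw [h, hV₁, hV₂, hV₃]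
    simp only [ternary]; ring
  -- `b = 2 B(V, y)` for the polar form `B`
  obtain ⟨b, hb⟩ : ∃ b, b = 2 * (C m * V₁ * y₁ + C c * (V₂ * y₂ - C m * V₃ * y₃)) := ⟨_, rfl⟩
  obtain ⟨N, hN⟩ : ∃ N, N = ternary (C m) (C c) y₁ y₂ y₃ := ⟨_, rfl⟩
  obtain ⟨D', hD'⟩ : ∃ D', D' = F * D - b + D * N := ⟨_, rfl⟩
  have hDD : D * D' = ternary (C m) (C c) r₁ r₂ r₃ := by
    have e1 : r₁ = V₁ - D * y₁ := by rw [hV₁]; ring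
    have e2 : r₂ = V₂ - D * y₂ := by rw [hV₂]; ring
    have e3 : r₃ = V₃ - D * y₃ := by rw [hV₃]; ring
    rw [e1, e2, e3, hD', hb, hN]
    simp only [ternary] at h ⊢
    linear_combination h
  have hD'0 : D' ≠ 0 := by
    intro h0
    rw [h0, mul_zero] at hDD
    exact hr (ternary_eq_zero han hDD.symm)
  have hpos : 0 < D.natDegree := by
    by_contra h0
    have h0' : D.degree = 0 := by
      rw [degree_eq_natDegree hD]
      have : D.natDegree = 0 := by omega
      rw [this]; rfl
    rw [h0'] at hr₁ hr₂ hr₃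
    have kz : ∀ r : L[X], r.degree < 0 → r = 0 := fun r hr => by
      rw [← degree_eq_bot]; exact Nat.WithBot.lt_zero_iff.1 hr
    exact hr ⟨kz _ hr₁, kz _ hr₂, kz _ hr₃⟩
  have hlt : D'.natDegree < n := by
    have kz : ∀ r : L[X], r.degree < D.degree → (r ^ 2).natDegree ≤ 2 * (n - 1) := by
      intro r hr
      refine natDegree_pow_le.trans (Nat.mul_le_mul_left _ ?_)
      have : r.natDegree < D.natDegree := by
        rcases eq_or_ne r 0 with rfl | h0
        · simpa using hpos
        · exact natDegree_lt_natDegree h0 hr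
      omega
    have h1 : (D * D').natDegree ≤ 2 * (n - 1) := by
      rw [hDD, ternary]
      refine natDegree_add_le_of_degree_le ((natDegree_C_mul_le _ _).trans (kz _ hr₁))
        ((natDegree_C_mul_le _ _).trans ((natDegree_sub_le _ _).trans (max_le (kz _ hr₂)
          ((natDegree_C_mul_le _ _).trans (kz _ hr₃)))))
    rw [natDegree_mul hD hD'0] at h1
    omega
  refine ih _ hlt D' (V₁ * (N - F) + y₁ * (2 * F * D - b)) (V₂ * (N - F) + y₂ * (2 * F * D - b))
    (V₃ * (N - F) + y₃ * (2 * F * D - b)) hD'0 ?_ rfl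
  have hN' := hN
  simp only [ternary] at h hN' ⊢
  rw [hD']
  linear_combination (N - F) ^ 2 * h + (2 * F * D - b) ^ 2 * hN'
    + (N - F) * (2 * F * D - b) * hb

/-- Coefficientwise form of `m (g X⁴ + e²) = q(V)` with `V = v₀ + v₁ X + v₂ X²`. -/
theorem quartic_coefficients {L : Type*} [Field L] [CharZero L] {m c g e : L}
    (han : ∀ a b d : L, ternary m c a b d = 0 → a = 0 ∧ b = 0 ∧ d = 0)
    {P Q R : L[X]} (h : C m * (C g * X ^ 4 + C (e ^ 2)) = ternary (C m) (C c) P Q R) :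
    ∃ a₀ a₁ a₂ b₀ b₁ b₂ d₀ d₁ d₂ : L,
      ternary m c a₀ b₀ d₀ = m * e ^ 2 ∧
      m * a₀ * a₁ + c * (b₀ * b₁ - m * d₀ * d₁) = 0 ∧
      ternary m c a₁ b₁ d₁ + 2 * (m * a₀ * a₂ + c * (b₀ * b₂ - m * d₀ * d₂)) = 0 ∧
      m * a₁ * a₂ + c * (b₁ * b₂ - m * d₁ * d₂) = 0 ∧
      ternary m c a₂ b₂ d₂ = m * g := by
  obtain ⟨hP, hQ, hR⟩ := ternary_natDegree_le han (P := P) (Q := Q) (R := R) (j := 2)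
    (by rw [← h]; compute_degree)
  have quad : ∀ T : L[X], T.natDegree ≤ 2 →
      ∃ t₀ t₁ t₂, T = C t₀ + C t₁ * X + C t₂ * X ^ 2 := fun T hT =>
    ⟨T.coeff 0, T.coeff 1, T.coeff 2, by
      conv_lhs => rw [T.as_sum_range_C_mul_X_pow' (n := 3) (by omega)]
      simp [Finset.sum_range_succ]⟩
  obtain ⟨a₀, a₁, a₂, rfl⟩ := quad P hP
  obtain ⟨b₀, b₁, b₂, rfl⟩ := quad Q hQ
  obtain ⟨d₀, d₁, d₂, rfl⟩ := quad R hR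
  refine ⟨a₀, a₁, a₂, b₀, b₁, b₂, d₀, d₁, d₂, ?_⟩
  have h' : C (m * e ^ 2 - ternary m c a₀ b₀ d₀)
      + C (-2 * (m * a₀ * a₁ + c * (b₀ * b₁ - m * d₀ * d₁))) * X
      + C (-(ternary m c a₁ b₁ d₁ + 2 * (m * a₀ * a₂ + c * (b₀ * b₂ - m * d₀ * d₂)))) * X ^ 2
      + C (-2 * (m * a₁ * a₂ + c * (b₁ * b₂ - m * d₁ * d₂))) * X ^ 3
      + C (m * g - ternary m c a₂ b₂ d₂) * X ^ 4 = 0 := by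
    simp only [ternary, C_sub, C_add, C_neg, C_mul, C_pow,
      show (C (2 : L) : L[X]) = 2 from rfl] at h ⊢
    linear_combination h
  have c0 := congrArg (fun T => coeff T 0) h'
  have c1 := congrArg (fun T => coeff T 1) h'
  have c2 := congrArg (fun T => coeff T 2) h'
  have c3 := congrArg (fun T => coeff T 3) h'
  have c4 := congrArg (fun T => coeff T 4) h'
  simp only [coeff_add, coeff_C_mul, coeff_X_pow, coeff_X, coeff_C, coeff_zero] at c0 c1 c2 c3 c4
  norm_num at c0 c1 c2 c3 c4
  refine ⟨by linear_combination -c0, c1, by linear_combination -c2, c3, by linear_combination -c4⟩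

/-! ### The quartic is not represented by the ternary form -/

theorem exists_common_denominator {R L : Type*} [CommRing R] [IsDomain R] [Field L] [Algebra R L]
    [IsFractionRing R L] (a b d : L) : ∃ h A B D : R, h ≠ 0 ∧ algebraMap R L h * a = algebraMap R L A
      ∧ algebraMap R L h * b = algebraMap R L B ∧ algebraMap R L h * d = algebraMap R L D := by
  have inj : ∀ z : R, z ≠ 0 → algebraMap R L z ≠ 0 := fun z hz => by
    simpa using hz
  have key : ∀ z : L, ∃ h A : R, h ≠ 0 ∧ algebraMap R L h * z = algebraMap R L A := by
    intro z
    obtain ⟨A, h, hh, rfl⟩ := IsFractionRing.div_surjective (A := R) z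
    have hh0 : h ≠ 0 := nonZeroDivisors.ne_zero hh
    exact ⟨h, A, hh0, mul_div_cancel₀ _ (inj h hh0)⟩
  obtain ⟨h₁, A, n₁, e₁⟩ := key a
  obtain ⟨h₂, B, n₂, e₂⟩ := key b
  obtain ⟨h₃, D, n₃, e₃⟩ := key d
  refine ⟨h₁ * h₂ * h₃, A * h₂ * h₃, B * h₁ * h₃, D * h₁ * h₂, by simp [*], ?_, ?_, ?_⟩
  · simp only [map_mul, ← e₁]; ring
  · simp only [map_mul, ← e₂]; ring
  · simp only [map_mul, ← e₃]; ring

theorem norm_anisotropic_polynomial {k : Type*} [Field k] {μ : k} (hμ : ¬ IsSquare μ)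
    {B D : k[X]} (h : B ^ 2 - C μ * D ^ 2 = 0) : B = 0 ∧ D = 0 := by
  have h1 : B ^ 2 = C μ * D ^ 2 := by linear_combination h
  have h2 := congrArg leadingCoeff h1
  rw [leadingCoeff_pow, leadingCoeff_mul, leadingCoeff_pow, leadingCoeff_C] at h2
  have hD : D = 0 := by
    by_contra hD
    have hD' := leadingCoeff_ne_zero.2 hD
    exact hμ ⟨B.leadingCoeff / D.leadingCoeff, by field_simp; linear_combination -h2⟩
  refine ⟨?_, hD⟩
  rw [hD] at h1
  simpa using h1

theorem ternary_anisotropic_polynomial {k : Type*} [Field k] [CharZero k] {μ α κ : k}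
    (hμ : ¬ IsSquare μ) (hα : α ≠ 0) (hκ : κ ≠ 0) {A B D : k[X]}
    (h : ternary (C μ) (C κ * (X ^ 2 - C (α ^ 2))) A B D = 0) : A = 0 ∧ B = 0 ∧ D = 0 := by
  have hμ0 : μ ≠ 0 := by rintro rfl; exact hμ ⟨0, by simp⟩
  rw [ternary] at h
  have hN : B ^ 2 - C μ * D ^ 2 = 0 := by
    by_contra hN
    -- `-μ (B² - μ D²) = (μ D)² - μ B²` is again a norm
    have := eval_eq_zero_of_norm (a := α) hμ (C κ * (X + C α)) (B ^ 2 - C μ * D ^ 2)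
      (C μ * D * A) (B * A) hN (by
        simp only [C_pow] at h
        linear_combination (B ^ 2 - C μ * D ^ 2) * h)
    simp [hκ, hα, ← two_mul] at this
  obtain ⟨rfl, rfl⟩ := norm_anisotropic_polynomial hμ hN
  refine ⟨?_, rfl, rfl⟩
  simpa [hμ0] using h

theorem ternary_anisotropic {k L : Type*} [Field k] [CharZero k] [Field L] [Algebra k[X] L]
    [IsFractionRing k[X] L] {μ α κ : k}
    (hμ : ¬ IsSquare μ) (hα : α ≠ 0) (hκ : κ ≠ 0) (a b d : L)
    (h : ternary (algebraMap k[X] L (C μ)) (algebraMap k[X] L (C κ * (X ^ 2 - C (α ^ 2)))) a b d = 0) :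
    a = 0 ∧ b = 0 ∧ d = 0 := by
  obtain ⟨z, A, B, D, hz, eA, eB, eD⟩ := exists_common_denominator (R := k[X]) a b d
  have hz' : algebraMap k[X] L z ≠ 0 := by simpa using hz
  have h1 : ternary (C μ) (C κ * (X ^ 2 - C (α ^ 2))) A B D = 0 := by
    apply IsFractionRing.injective k[X] L
    rw [map_zero]
    have : algebraMap k[X] L (ternary (C μ) (C κ * (X ^ 2 - C (α ^ 2))) A B D) =
        algebraMap k[X] L z ^ 2 * ternary (algebraMap k[X] L (C μ))
          (algebraMap k[X] L (C κ * (X ^ 2 - C (α ^ 2)))) a b d := by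
      generalize C κ * (X ^ 2 - C (α ^ 2)) = c
      simp only [ternary, map_add, map_sub, map_mul, map_pow, ← eA, ← eB, ← eD]
      ring
    rw [this, h, mul_zero]
  obtain ⟨rfl, rfl, rfl⟩ := ternary_anisotropic_polynomial hμ hα hκ h1
  simpa [hz'] using And.intro eA (And.intro eB eD)

/-- On the orthogonal complement of a vector of square class `m`, the form `⟨m, c, -mc⟩`
represents only `c` times norms. -/
theorem orthogonal_norm {L : Type*} [Field L] {m c e a₀ b₀ d₀ a b d : L} (hm : m ≠ 0) (he : e ≠ 0)
    (hN : ∀ b d : L, b ^ 2 - m * d ^ 2 = 0 → b = 0 ∧ d = 0)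
    (h₀ : ternary m c a₀ b₀ d₀ = m * e ^ 2) (h : m * a₀ * a + c * (b₀ * b - m * d₀ * d) = 0) :
    ∃ z n₁ n₂ : L, z ≠ 0 ∧ ternary m c a b d * c * z ^ 2 = n₁ ^ 2 - m * n₂ ^ 2 := by
  simp only [ternary] at h₀ ⊢
  by_cases h0 : b₀ ^ 2 - m * d₀ ^ 2 = 0
  · obtain ⟨rfl, rfl⟩ := hN _ _ h0
    have ha₀ : a₀ ≠ 0 := by
      rintro rfl
      apply mul_ne_zero hm (pow_ne_zero 2 he)
      rw [← h₀]; ring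
    have ha : a = 0 := by
      have : m * a₀ * a = 0 := by linear_combination h
      simpa [hm, ha₀] using this
    exact ⟨1, c * b, c * d, one_ne_zero, by rw [ha]; ring⟩
  · refine ⟨b₀ ^ 2 - m * d₀ ^ 2, m * (b₀ * (e * a) + d₀ * (c * (b₀ * d - d₀ * b))),
      b₀ * (c * (b₀ * d - d₀ * b)) + m * d₀ * (e * a), h0, ?_⟩
    linear_combination (b₀ ^ 2 - m * d₀ ^ 2) * ((m * a ^ 2) * h₀ +
      (c * (b₀ * b - m * d₀ * d) - m * a₀ * a) * h)

/-- The quartic `μ (g X⁴ + e²)` with `g = (Y² - α²)(Y² - β²)` is not represented over `k(Y)(X)`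
by the form `⟨μ, κ (Y² - α²), -μ κ (Y² - α²)⟩`. By Cassels–Pfister it would be `q(v₀ + v₁ X + v₂ X²)`;
the Gram determinant of `v₀, v₁, v₂` makes `q(v₁)` the abscissa of a point on the cubic, and
orthogonality of `v₀` and `v₁` supplies the norm condition. -/
theorem quartic_not_represented {k L : Type*} [Field k] [CharZero k] [Field L] [Algebra k[X] L]
    [IsFractionRing k[X] L] {i μ α β e ε κ D : k}
    (hi : i ^ 2 = -1) (hμ : ¬ IsSquare μ) (hαβ : α * β = 1) (hD : D = α ^ 2 - β ^ 2)
    (hD0 : D ≠ 0) (hε : ε ≠ 0) (he : 2 * e = ε ^ 2 * D) (hκ : κ ≠ 0)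
    (Z V₁ V₂ V₃ : L[X]) (hZ : Z ≠ 0)
    (h : (C (algebraMap k[X] L (C μ)) * (C (algebraMap k[X] L
        ((X ^ 2 - C (α ^ 2)) * (X ^ 2 - C (β ^ 2)))) * X ^ 4
          + C (algebraMap k[X] L (C e) ^ 2))) * Z ^ 2
      = ternary (C (algebraMap k[X] L (C μ)))
          (C (algebraMap k[X] L (C κ * (X ^ 2 - C (α ^ 2))))) V₁ V₂ V₃) : False := by
  have hμ0 : μ ≠ 0 := by rintro rfl; exact hμ ⟨0, by simp⟩
  have hα0 : α ≠ 0 := left_ne_zero_of_mul_eq_one hαβ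
  have hβ0 : β ≠ 0 := right_ne_zero_of_mul_eq_one hαβ
  have hab : α - β ≠ 0 := fun h => hD0 (by rw [hD]; linear_combination (α + β) * h)
  have hab' : α + β ≠ 0 := fun h => hD0 (by rw [hD]; linear_combination (α - β) * h)
  have he0 : e ≠ 0 := by
    rintro rfl
    exact mul_ne_zero (pow_ne_zero 2 hε) hD0 (by rw [← he]; ring)
  have inj := IsFractionRing.injective k[X] L
  have : CharZero L := charZero_of_injective_algebraMap inj
  have ne : ∀ z : k[X], z ≠ 0 → algebraMap k[X] L z ≠ 0 := fun z hz => by simpa using hz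
  have han := ternary_anisotropic (L := L) hμ hα0 hκ
  obtain ⟨P, Q, R, hPQR⟩ := cassels_pfister han _ Z V₁ V₂ V₃ hZ h
  obtain ⟨a₀, a₁, a₂, b₀, b₁, b₂, d₀, d₁, d₂, h00, h01, h11, h12, h22⟩ :=
    quartic_coefficients han hPQR
  obtain ⟨y, hy⟩ : ∃ y : k[X], y = X ^ 2 - C (α ^ 2) := ⟨_, rfl⟩
  obtain ⟨x, hx⟩ : ∃ x : k[X], x = X ^ 2 - C (β ^ 2) := ⟨_, rfl⟩
  have hx' : x = (X - C β) * (X + C β) := by rw [hx]; simp only [C_pow]; ring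
  have hy0 : y ≠ 0 := by
    intro h0
    have := congrArg (eval β) h0
    rw [hy] at this
    simp at this
    exact hD0 (by rw [hD]; linear_combination -this)
  obtain ⟨m, hm⟩ : ∃ m, m = algebraMap k[X] L (C μ) := ⟨_, rfl⟩
  obtain ⟨c, hc⟩ : ∃ c, c = algebraMap k[X] L (C κ * y) := ⟨_, rfl⟩
  rw [← hy, ← hx] at h22
  rw [← hy] at h00 h01 h11 h12 han
  rw [← hm, ← hc] at h00 h01 h11 h12 h22 han
  have hm0 : m ≠ 0 := by rw [hm]; exact ne _ (by simpa using hμ0)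
  have hc0 : c ≠ 0 := by rw [hc]; exact ne _ (mul_ne_zero (by simpa using hκ) hy0)
  have he0' : algebraMap k[X] L (C e) ≠ 0 := ne _ (by simpa using he0)
  have hN : ∀ b d : L, b ^ 2 - m * d ^ 2 = 0 → b = 0 ∧ d = 0 := fun b d hbd =>
    (han 0 b d (by rw [ternary, hbd]; ring)).2
  -- clearing denominators in `c` times a norm
  have clear : ∀ z n₁ n₂ r : L, z ≠ 0 → r * c * z ^ 2 = n₁ ^ 2 - m * n₂ ^ 2 →
      ∃ Z A B : k[X], Z ≠ 0 ∧ r * algebraMap k[X] L (C κ * y * Z ^ 2)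
        = algebraMap k[X] L (A ^ 2 - C μ * B ^ 2) := by
    intro z n₁ n₂ r hz hr
    obtain ⟨w, Z, A, B, hw, eZ, eA, eB⟩ := exists_common_denominator (R := k[X]) z n₁ n₂
    refine ⟨Z, A, B, ?_, ?_⟩
    · rintro rfl
      rw [map_zero] at eZ
      exact mul_ne_zero (ne _ hw) hz eZ
    · rw [map_mul, ← hc, map_sub, map_mul _ (C μ), ← hm, map_pow, map_pow, map_pow, ← eZ, ← eA,
        ← eB]
      linear_combination algebraMap k[X] L w ^ 2 * hr
  obtain ⟨r, hr⟩ : ∃ r, r = ternary m c a₁ b₁ d₁ := ⟨_, rfl⟩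
  by_cases hr0 : r = 0
  -- If `q(v₁) = 0` then `v₂` is orthogonal to `v₀`, and `X - β` divides a norm to odd order.
  · rw [hr0] at hr
    have h02 : m * a₀ * a₂ + c * (b₀ * b₂ - m * d₀ * d₂) = 0 := by
      rw [← hr, zero_add] at h11
      simpa using h11
    obtain ⟨z, n₁, n₂, hz, hn⟩ := orthogonal_norm hm0 he0' hN h00 h02
    obtain ⟨Z, A, B, hZ, hAB⟩ := clear z n₁ n₂ _ hz hn
    rw [h22, hm, ← map_mul, ← map_mul] at hAB
    have := eval_eq_zero_of_norm (a := β) hμ (C μ * C κ * (X + C β)) (y * Z) A B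
      (mul_ne_zero hy0 hZ) (by rw [← inj hAB, hx']; ring)
    simp [hμ0, hκ, hβ0, ← two_mul] at this
  · obtain ⟨z, n₁, n₂, hz, hn⟩ := orthogonal_norm hm0 he0' hN h00 h01
    rw [← hr] at hn
    obtain ⟨E, A, B, hE, hAB⟩ := clear z n₁ n₂ _ hz hn
    obtain ⟨r₁, d, hd, hrd⟩ := IsFractionRing.div_surjective (A := k[X]) r
    have hd0 : d ≠ 0 := nonZeroDivisors.ne_zero hd
    have hd' := ne _ hd0
    have hrd' : r * algebraMap k[X] L d ^ 2 = algebraMap k[X] L (r₁ * d) := by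
      rw [← hrd, map_mul]; field_simp
    -- `-(m c Δ)²` is the Gram determinant of `v₀, v₁, v₂`.
    obtain ⟨Δ, hΔ⟩ : ∃ Δ, Δ = a₀ * (b₁ * d₂ - b₂ * d₁) - a₁ * (b₀ * d₂ - b₂ * d₀)
      + a₂ * (b₀ * d₁ - b₁ * d₀) := ⟨_, rfl⟩
    have gram : (2 * m * c * Δ) ^ 2 = r * (r ^ 2 - 4 * m ^ 2 * algebraMap k[X] L (C e) ^ 2 *
        algebraMap k[X] L (y * x)) := by
      obtain ⟨q0, hq0⟩ : ∃ q, q = ternary m c a₀ b₀ d₀ := ⟨_, rfl⟩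
      obtain ⟨q2, hq2⟩ : ∃ q, q = ternary m c a₂ b₂ d₂ := ⟨_, rfl⟩
      obtain ⟨p01, hp01⟩ : ∃ q, q = m * a₀ * a₁ + c * (b₀ * b₁ - m * d₀ * d₁) := ⟨_, rfl⟩
      obtain ⟨p02, hp02⟩ : ∃ q, q = m * a₀ * a₂ + c * (b₀ * b₂ - m * d₀ * d₂) := ⟨_, rfl⟩
      obtain ⟨p12, hp12⟩ : ∃ q, q = m * a₁ * a₂ + c * (b₁ * b₂ - m * d₁ * d₂) := ⟨_, rfl⟩
      have det : (2 * m * c * Δ) ^ 2 = -4 * (q0 * r * q2 + 2 * p01 * p12 * p02 - q0 * p12 ^ 2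
          - r * p02 ^ 2 - q2 * p01 ^ 2) := by
        rw [hΔ, hq0, hr, hq2, hp01, hp02, hp12]; simp only [ternary]; ring
      rw [det]
      rw [← hq0] at h00
      rw [← hq2] at h22
      rw [← hp01] at h01
      rw [← hp12] at h12
      rw [← hr, ← hp02] at h11
      rw [h01, h12, h00, h22]
      linear_combination r * (2 * p02 - r) * h11
    have gram' : (2 * m * c * Δ * algebraMap k[X] L d ^ 3) ^ 2 = algebraMap k[X] L
        ((r₁ * d) * ((r₁ * d) ^ 2 - C (4 * μ ^ 2 * e ^ 2) * (y * x) * d ^ 4)) := by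
      rw [mul_pow, gram, map_mul _ (r₁ * d), map_sub, map_pow _ (r₁ * d), ← hrd']
      simp only [map_mul, map_pow, C_mul, C_pow, hm, show (C (4 : k) : k[X]) = 4 from rfl,
        map_ofNat]
      ring
    obtain ⟨S, hS⟩ := IsIntegrallyClosed.exists_algebraMap_eq_of_isIntegral_pow
      (R := k[X]) (n := 2) (x := 2 * m * c * Δ * algebraMap k[X] L d ^ 3)
      (by norm_num) (by rw [gram']; exact isIntegral_algebraMap)
    rw [← hS, ← map_pow] at gram'
    have hR0 : r₁ * d ≠ 0 := by
      intro h0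
      rw [h0, map_zero] at hrd'
      exact mul_ne_zero hr0 (pow_ne_zero 2 hd') hrd'
    refine cubic_norm_contradiction hi hμ hαβ hD hD0 hε he hκ (r₁ * d) S d E (d * A) (d * B) hR0 hd0
      hE ?_ ?_
    · rw [← hy, ← hx]; exact inj gram'
    · rw [← hy]
      apply inj
      have e1 : (r₁ * d) * C κ * y * E ^ 2 = (r₁ * d) * (C κ * y * E ^ 2) := by ring
      have e2 : (d * A) ^ 2 - C μ * (d * B) ^ 2 = d ^ 2 * (A ^ 2 - C μ * B ^ 2) := by ring
      rw [e1, e2, map_mul _ (r₁ * d), ← hrd', map_mul _ (d ^ 2), ← hAB, map_pow]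
      ring

/-! ### Primes of a polynomial ring and norms from a quadratic extension -/

theorem MvPolynomial.exists_eq_add_omega_mul {k τ : Type*} [Field k] {μ : k}
    (P : MvPolynomial τ (QuadraticAlgebra k μ 0)) : ∃ A B : MvPolynomial τ k,
      P = MvPolynomial.map (algebraMap k _) A
        + MvPolynomial.C QuadraticAlgebra.omega * MvPolynomial.map (algebraMap k _) B := by
  induction P using MvPolynomial.induction_on with
  | C a =>
    refine ⟨MvPolynomial.C a.re, MvPolynomial.C a.im, ?_⟩
    rw [MvPolynomial.map_C, MvPolynomial.map_C, ← MvPolynomial.C_mul, ← MvPolynomial.C_add]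
    congr 1
    ext <;> simp
  | add P Q hP hQ =>
    obtain ⟨A, B, rfl⟩ := hP
    obtain ⟨A', B', rfl⟩ := hQ
    exact ⟨A + A', B + B', by simp only [map_add]; ring⟩
  | mul_X P n hP =>
    obtain ⟨A, B, rfl⟩ := hP
    exact ⟨A * MvPolynomial.X n, B * MvPolynomial.X n,
      by simp only [map_mul, MvPolynomial.map_X]; ring⟩

theorem MvPolynomial.add_omega_mul_inj {k τ : Type*} [Field k] {μ : k}
    {A B A' B' : MvPolynomial τ k}
    (h : MvPolynomial.map (algebraMap k (QuadraticAlgebra k μ 0)) A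
        + MvPolynomial.C QuadraticAlgebra.omega * MvPolynomial.map (algebraMap k _) B
      = MvPolynomial.map (algebraMap k _) A'
        + MvPolynomial.C QuadraticAlgebra.omega * MvPolynomial.map (algebraMap k _) B') :
    A = A' ∧ B = B' := by
  constructor <;> ext m
  · have := congrArg QuadraticAlgebra.re (congrArg (MvPolynomial.coeff m) h)
    simpa [MvPolynomial.coeff_map] using this
  · have := congrArg QuadraticAlgebra.im (congrArg (MvPolynomial.coeff m) h)
    simpa [MvPolynomial.coeff_map] using this

/-- A prime `p` of a polynomial ring over `k` is, up to a constant, a norm from `k(√μ)`, or it is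
inert: it divides a norm `A² - μ B²` only if it divides both `A` and `B`. -/
theorem prime_norm_or_inert {k τ : Type*} [Field k] {μ : k} (hμ : ¬ IsSquare μ)
    {p : MvPolynomial τ k} (hp : Prime p) :
    (∃ κ : k, κ ≠ 0 ∧ ∃ A B : MvPolynomial τ k,
      p = MvPolynomial.C κ * (A ^ 2 - MvPolynomial.C μ * B ^ 2)) ∨
    (∀ A B : MvPolynomial τ k, p ∣ A ^ 2 - MvPolynomial.C μ * B ^ 2 → p ∣ A ∧ p ∣ B) := by
  have : Fact (∀ r : k, r ^ 2 ≠ μ + 0 * r) := ⟨fun r hr => hμ ⟨r, by rw [← sq, hr]; ring⟩⟩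
  have hsq : (QuadraticAlgebra.omega : QuadraticAlgebra k μ 0) ^ 2 = algebraMap k _ μ := by
    ext <;> simp [sq]
  let L := QuadraticAlgebra k μ 0
  let ι : MvPolynomial τ k →+* MvPolynomial τ L := MvPolynomial.map (algebraMap k L)
  let om : MvPolynomial τ L := MvPolynomial.C QuadraticAlgebra.omega
  have hom : om ^ 2 = ι (MvPolynomial.C μ) := by
    simp only [om, ι, MvPolynomial.map_C, ← MvPolynomial.C_pow]
    exact congrArg _ hsq
  have hι : Function.Injective ι := MvPolynomial.map_injective _ (algebraMap k L).injective
  have hnorm : ∀ A B, ι (A ^ 2 - MvPolynomial.C μ * B ^ 2)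
      = (ι A + om * ι B) * (ι A - om * ι B) := by
    intro A B
    rw [map_sub, map_mul, ← hom, map_pow, map_pow]; ring
  have hdvd : ∀ A B, ι p ∣ ι A + om * ι B → p ∣ A ∧ p ∣ B := by
    rintro A B ⟨P, hP⟩
    obtain ⟨A', B', rfl⟩ := MvPolynomial.exists_eq_add_omega_mul P
    have := MvPolynomial.add_omega_mul_inj (A := A) (B := B) (A' := p * A') (B' := p * B')
      (μ := μ) (by
        change ι A + om * ι B = ι (p * A') + om * ι (p * B')
        rw [hP, map_mul, map_mul]
        change ι p * (ι A' + om * ι B') = _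
        ring)
    exact ⟨⟨A', this.1⟩, ⟨B', this.2⟩⟩
  have hunit : ∀ A B, IsUnit (A ^ 2 - MvPolynomial.C μ * B ^ 2) → IsUnit (ι A + om * ι B) := by
    intro A B h
    have := h.map ι
    rw [hnorm] at this
    exact isUnit_of_mul_isUnit_left this
  by_cases hP : Prime (ι p)
  · right
    intro A B h
    have h' : ι p ∣ (ι A + om * ι B) * (ι A - om * ι B) := hnorm A B ▸ map_dvd ι h
    rcases hP.dvd_or_dvd h' with h | h
    · exact hdvd A B h
    · have := hdvd A (-B) (by rw [map_neg]; convert h using 1; ring)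
      simpa using this
  · left
    have hn0 : ι p ≠ 0 := fun h => hp.ne_zero (hι (by rw [h, map_zero]))
    have hnu : ¬ IsUnit (ι p) := by
      intro h
      have := hdvd 1 0 (h.dvd)
      exact hp.not_isUnit (isUnit_of_dvd_one this.1)
    rw [← UniqueFactorizationMonoid.irreducible_iff_prime] at hP
    obtain ⟨P, Q, hPQ, hPu, hQu⟩ : ∃ P Q, ι p = P * Q ∧ ¬ IsUnit P ∧ ¬ IsUnit Q := by
      by_contra hcon
      push Not at hcon
      exact hP ⟨hnu, fun a b hab => by
        by_cases ha : IsUnit a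
        · exact Or.inl ha
        · exact Or.inr (hcon a b hab ha)⟩
    obtain ⟨A, B, rfl⟩ := MvPolynomial.exists_eq_add_omega_mul P
    obtain ⟨A', B', rfl⟩ := MvPolynomial.exists_eq_add_omega_mul Q
    change ι p = (ι A + om * ι B) * (ι A' + om * ι B') at hPQ
    have hp2 : p ^ 2 = (A ^ 2 - MvPolynomial.C μ * B ^ 2) * (A' ^ 2 - MvPolynomial.C μ * B' ^ 2) := by
      have h1 := MvPolynomial.add_omega_mul_inj (A := p) (B := 0)
        (A' := A * A' + MvPolynomial.C μ * (B * B')) (B' := A * B' + B * A') (μ := μ) (by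
          change ι p + om * ι 0 = ι _ + om * ι _
          rw [hPQ]
          simp only [map_add, map_mul ι, ← hom, map_zero]
          ring)
      linear_combination (p + A * A' + MvPolynomial.C μ * (B * B')) * h1.1
        - MvPolynomial.C μ * (A * B' + B * A') * h1.2
    obtain ⟨j, hj, hass⟩ := (dvd_prime_pow hp 2).1 ⟨_, hp2⟩
    have hj' : j = 0 ∨ j = 1 ∨ j = 2 := by omega
    rcases hj' with rfl | rfl | rfl
    · rw [pow_zero, associated_one_iff_isUnit] at hass
      exact absurd (hunit A B hass) hPu
    · rw [pow_one] at hass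
      obtain ⟨c, hc⟩ := hass
      obtain ⟨κ, hκ, hκ'⟩ := MvPolynomial.isUnit_iff_eq_C_of_isReduced.1 c.isUnit
      exact ⟨κ, hκ.ne_zero, A, B, by rw [← hc, hκ']; ring⟩
    · obtain ⟨c, hc⟩ := hass
      have hne : A ^ 2 - MvPolynomial.C μ * B ^ 2 ≠ 0 := by
        intro h0
        rw [h0, zero_mul] at hp2
        exact pow_ne_zero 2 hp.ne_zero hp2
      have : A' ^ 2 - MvPolynomial.C μ * B' ^ 2 = (c : MvPolynomial τ k) :=
        mul_left_cancel₀ hne (by rw [hc, hp2])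
      exact absurd (hunit A' B' (this ▸ c.isUnit)) hQu

theorem inert_pow_dvd {R : Type*} [CommRing R] [IsDomain R] {p m : R} (hp : Prime p)
    (h : ∀ A B : R, p ∣ A ^ 2 - m * B ^ 2 → p ∣ A ∧ p ∣ B) (n : ℕ) (A B : R)
    (hd : p ^ (2 * n + 1) ∣ A ^ 2 - m * B ^ 2) : p ^ (n + 1) ∣ A ∧ p ^ (n + 1) ∣ B := by
  induction n generalizing A B with
  | zero => simpa using h A B (by simpa using hd)
  | succ n ih =>
    obtain ⟨⟨A', rfl⟩, ⟨B', rfl⟩⟩ := h A B ((dvd_pow_self p (by omega)).trans hd)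
    have e : (p * A') ^ 2 - m * (p * B') ^ 2 = p ^ 2 * (A' ^ 2 - m * B' ^ 2) := by ring
    rw [e, show 2 * (n + 1) + 1 = 2 + (2 * n + 1) by ring, pow_add] at hd
    obtain ⟨h1, h2⟩ := ih A' B' ((mul_dvd_mul_iff_left (pow_ne_zero 2 hp.ne_zero)).1 hd)
    rw [pow_succ' p (n + 1)]
    exact ⟨mul_dvd_mul_left p h1, mul_dvd_mul_left p h2⟩

theorem inert_even_multiplicity {R : Type*} [CommRing R] [IsDomain R]
    [UniqueFactorizationMonoid R] {p m : R} (hp : Prime p)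
    (h : ∀ A B : R, p ∣ A ^ 2 - m * B ^ 2 → p ∣ A ∧ p ∣ B) (A B : R)
    (h0 : A ^ 2 - m * B ^ 2 ≠ 0) : Even (multiplicity p (A ^ 2 - m * B ^ 2)) := by
  by_contra hodd
  rw [Nat.not_even_iff_odd] at hodd
  obtain ⟨n, hn⟩ := hodd
  have hf : FiniteMultiplicity p (A ^ 2 - m * B ^ 2) := FiniteMultiplicity.of_prime_left hp h0
  obtain ⟨⟨A', hA⟩, ⟨B', hB⟩⟩ := inert_pow_dvd hp h n A B (hn ▸ pow_multiplicity_dvd _ _)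
  have : p ^ (2 * n + 2) ∣ A ^ 2 - m * B ^ 2 :=
    ⟨A' ^ 2 - m * B' ^ 2, by rw [hA, hB]; ring⟩
  have := hf.le_multiplicity_of_pow_dvd this
  omega

theorem norm_of_forall_prime {k τ : Type*} [Field k] {μ : k} (Q : MvPolynomial τ k) (hQ : Q ≠ 0)
    (h : ∀ p, Prime p → p ∣ Q → ∃ κ : k, κ ≠ 0 ∧ ∃ A B : MvPolynomial τ k,
      p = MvPolynomial.C κ * (A ^ 2 - MvPolynomial.C μ * B ^ 2)) :
    ∃ κ : k, κ ≠ 0 ∧ ∃ A B : MvPolynomial τ k,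
      Q = MvPolynomial.C κ * (A ^ 2 - MvPolynomial.C μ * B ^ 2) := by
  induction Q using UniqueFactorizationMonoid.induction_on_prime with
  | h₁ => exact absurd rfl hQ
  | h₂ x hx =>
    obtain ⟨κ, hκ, hκ'⟩ := MvPolynomial.isUnit_iff_eq_C_of_isReduced.1 hx
    exact ⟨κ, hκ.ne_zero, 1, 0, by rw [hκ']; ring⟩
  | h₃ a p ha hp ih =>
    obtain ⟨κ, hκ, A, B, hAB⟩ := ih ha fun q hq hqa => h q hq (hqa.mul_left p)
    obtain ⟨κ', hκ', A', B', hAB'⟩ := h p hp (dvd_mul_right p a)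
    refine ⟨κ' * κ, mul_ne_zero hκ' hκ, A * A' + MvPolynomial.C μ * (B * B'), A * B' + B * A', ?_⟩
    rw [hAB, hAB', MvPolynomial.C_mul]
    ring

/-- In a pencil, `Y - c X` is a combination of any two members `Y - a X` and `Y - b X`, so `p` divides
it at least as often as one of them. -/
theorem multiplicity_pencil {k τ : Type*} [Field k] {a b : k} (hab : a ≠ b) (c : k)
    {p X Y : MvPolynomial τ k} (hp : Prime p) (hc : Y - MvPolynomial.C c * X ≠ 0) :
    multiplicity p (Y - MvPolynomial.C a * X) ≤ multiplicity p (Y - MvPolynomial.C c * X) ∨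
    multiplicity p (Y - MvPolynomial.C b * X) ≤ multiplicity p (Y - MvPolynomial.C c * X) := by
  have hf := FiniteMultiplicity.of_prime_left hp hc
  have hab' : a - b ≠ 0 := sub_ne_zero.2 hab
  have e : Y - MvPolynomial.C c * X
      = MvPolynomial.C ((c - b) / (a - b)) * (Y - MvPolynomial.C a * X)
        + MvPolynomial.C ((a - c) / (a - b)) * (Y - MvPolynomial.C b * X) := by
    have e1 : MvPolynomial.C (σ := τ) ((c - b) / (a - b)) + MvPolynomial.C ((a - c) / (a - b)) = 1 := by
      rw [← MvPolynomial.C_add, ← MvPolynomial.C_1]; congr 1; field_simp; ring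
    have e2 : MvPolynomial.C (σ := τ) ((c - b) / (a - b)) * MvPolynomial.C a
        + MvPolynomial.C ((a - c) / (a - b)) * MvPolynomial.C b = MvPolynomial.C c := by
      rw [← MvPolynomial.C_mul, ← MvPolynomial.C_mul, ← MvPolynomial.C_add]; congr 1; field_simp
      ring
    linear_combination -Y * e1 + X * e2
  rcases le_total (multiplicity p (Y - MvPolynomial.C a * X))
    (multiplicity p (Y - MvPolynomial.C b * X)) with h | h
  · left
    apply hf.le_multiplicity_of_pow_dvd
    rw [e]
    exact dvd_add ((pow_multiplicity_dvd _ _).mul_left _)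
      (((pow_dvd_pow p h).trans (pow_multiplicity_dvd _ _)).mul_left _)
  · right
    apply hf.le_multiplicity_of_pow_dvd
    rw [e]
    exact dvd_add (((pow_dvd_pow p h).trans (pow_multiplicity_dvd _ _)).mul_left _)
      ((pow_multiplicity_dvd _ _).mul_left _)

/-- On a rational surface the conic-bundle function `y² - α² x²` is a constant times a norm from
`k(√μ)`: an inert prime occurs in it with even multiplicity, because it occurs with even
multiplicity in `t² - μ e²`, and at most one of the four factors `y ± α x`, `y ± β x` contains it more
often than the others do. -/
theorem exists_norm_of_polynomial_fractions {k τ L : Type*} [Field k] [Field L]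
    [Algebra k L] [Algebra (MvPolynomial τ k) L] [IsScalarTower k (MvPolynomial τ k) L]
    [IsFractionRing (MvPolynomial τ k) L] {μ α β e : k}
    (hμ : ¬ IsSquare μ) (hαβ : α ^ 2 ≠ β ^ 2) (x y t : L)
    (ht : t ^ 2 = algebraMap k L μ * ((y ^ 2 - algebraMap k L α ^ 2 * x ^ 2)
      * (y ^ 2 - algebraMap k L β ^ 2 * x ^ 2) + algebraMap k L e ^ 2))
    (h₁ : y ^ 2 - algebraMap k L α ^ 2 * x ^ 2 ≠ 0)
    (h₂ : y ^ 2 - algebraMap k L β ^ 2 * x ^ 2 ≠ 0) :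
    ∃ κ : k, κ ≠ 0 ∧ ∃ a b : L,
      y ^ 2 - algebraMap k L α ^ 2 * x ^ 2 = algebraMap k L κ * (a ^ 2 - algebraMap k L μ * b ^ 2) := by
  have inj : Function.Injective (algebraMap (MvPolynomial τ k) L) := IsFractionRing.injective _ _
  have hC : ∀ c : k, algebraMap k L c = algebraMap (MvPolynomial τ k) L (MvPolynomial.C c) := fun c =>
    IsScalarTower.algebraMap_apply k (MvPolynomial τ k) L c
  have hμ0 : μ ≠ 0 := by rintro rfl; exact hμ ⟨0, by simp⟩
  obtain ⟨h, X, Y, T, hh, hX, hY, hT⟩ := exists_common_denominator (R := MvPolynomial τ k) x y t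
  have hh' : algebraMap (MvPolynomial τ k) L h ≠ 0 := fun h0 => hh (inj (by rw [h0, map_zero]))
  let l : k → MvPolynomial τ k := fun c => Y - MvPolynomial.C c * X
  have hl : ∀ c, l c * l (-c) = Y ^ 2 - MvPolynomial.C c ^ 2 * X ^ 2 := fun c => by
    simp only [l, map_neg]; ring
  have hq : ∀ c : k, algebraMap (MvPolynomial τ k) L (Y ^ 2 - MvPolynomial.C c ^ 2 * X ^ 2)
      = algebraMap (MvPolynomial τ k) L h ^ 2 * (y ^ 2 - algebraMap k L c ^ 2 * x ^ 2) := by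
    intro c
    rw [map_sub, map_mul, map_pow, map_pow, map_pow, ← hC, ← hX, ← hY]; ring
  have hne : ∀ c : k, y ^ 2 - algebraMap k L c ^ 2 * x ^ 2 ≠ 0 → l c ≠ 0 ∧ l (-c) ≠ 0 := by
    intro c hc
    rw [← mul_ne_zero_iff, hl]
    intro h0
    have := hq c
    rw [h0, map_zero] at this
    exact mul_ne_zero (pow_ne_zero 2 hh') hc this.symm
  obtain ⟨n1, n2⟩ := hne α h₁
  obtain ⟨n3, n4⟩ := hne β h₂
  have key : (h * T) ^ 2 - MvPolynomial.C μ * (MvPolynomial.C e * h ^ 2) ^ 2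
      = MvPolynomial.C μ * ((l α * l (-α)) * (l β * l (-β))) := by
    apply inj
    rw [hl, hl, map_mul _ (MvPolynomial.C μ) (_ * _), map_mul _ (_ - _) (_ - _), hq, hq, map_sub]
    simp only [map_mul, map_pow, ← hC, ← hT]
    linear_combination algebraMap (MvPolynomial τ k) L h ^ 4 * ht
  have hCμ : MvPolynomial.C (σ := τ) μ ≠ 0 := by simpa using hμ0
  have m12 := mul_ne_zero n1 n2
  have m34 := mul_ne_zero n3 n4
  have m0 := mul_ne_zero hCμ (mul_ne_zero m12 m34)
  have hne0 : (h * T) ^ 2 - MvPolynomial.C μ * (MvPolynomial.C e * h ^ 2) ^ 2 ≠ 0 := by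
    rw [key]; exact m0
  obtain ⟨s, Q, hsQ, hQ⟩ := exists_sq_mul_squarefree (l α * l (-α)) (mul_ne_zero n1 n2)
  have hs0 : s ≠ 0 := by
    rintro rfl
    exact mul_ne_zero n1 n2 (by rw [hsQ]; ring)
  obtain ⟨κ, hκ, A, B, hAB⟩ := norm_of_forall_prime (μ := μ) Q hQ.ne_zero (by
    intro p hp hpQ
    refine (prime_norm_or_inert hμ hp).resolve_right fun hin => ?_
    have hodd := odd_multiplicity_of_dvd_squarefree hs0 hQ hp hpQ
    have heven := inert_even_multiplicity hp hin _ _ hne0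
    have hpμ : multiplicity p (MvPolynomial.C μ) = 0 := by
      refine multiplicity_eq_zero.2 fun hd => hp.not_isUnit (isUnit_of_dvd_unit hd ?_)
      exact (IsUnit.mk0 μ hμ0).map MvPolynomial.C
    have fin : ∀ z : MvPolynomial τ k, z ≠ 0 → FiniteMultiplicity p z := fun z hz =>
      FiniteMultiplicity.of_prime_left hp hz
    rw [key, multiplicity_mul hp (fin _ m0), multiplicity_mul hp (fin _ (mul_ne_zero m12 m34)),
      multiplicity_mul hp (fin _ m12), multiplicity_mul hp (fin _ m34), hpμ] at heven
    rw [← hsQ, multiplicity_mul hp (fin _ m12)] at hodd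
    have d1 : α ≠ β := by rintro rfl; exact hαβ rfl
    have d2 : α ≠ -β := by rintro rfl; exact hαβ (by ring)
    have d3 : -α ≠ β := by rintro rfl; exact hαβ (by ring)
    have d4 : -α ≠ -β := fun h => d1 (neg_injective h)
    have pencil : ∀ a b c, a ≠ b → l c ≠ 0 → multiplicity p (l a) ≤ multiplicity p (l c) ∨
        multiplicity p (l b) ≤ multiplicity p (l c) := fun a b c hab hc =>
      multiplicity_pencil hab c hp hc
    have a1 := pencil _ _ (-α) d1 n2
    have a2 := pencil _ _ (-β) d1 n4
    have a3 := pencil _ _ (-α) d2 n2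
    have a4 := pencil _ _ β d2 n3
    have a5 := pencil _ _ α d3 n1
    have a6 := pencil _ _ (-β) d3 n4
    have a7 := pencil _ _ α d4 n1
    have a8 := pencil _ _ β d4 n3
    rw [Nat.even_iff] at heven
    rw [Nat.odd_iff] at hodd
    omega)
  refine ⟨κ, hκ, algebraMap _ L s / algebraMap _ L h * algebraMap _ L A,
    algebraMap _ L s / algebraMap _ L h * algebraMap _ L B, ?_⟩
  have h3 := hq α
  rw [← hl, hsQ, hAB] at h3
  simp only [map_mul, map_pow, map_sub, ← hC] at h3
  field_simp
  linear_combination -h3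

/-! ### Adjoining a square root -/

/-- The field `F(s)` for `s² ∈ F`, given as the set of all `a + b s` with `a, b ∈ F`. -/
def sqrtExtension {k K : Type*} [Field k] [Field K] [Algebra k K] (F : IntermediateField k K)
    (s : K) (hs : s ^ 2 ∈ F) : IntermediateField k K where
  carrier := {z | ∃ a ∈ F, ∃ b ∈ F, z = a + b * s}
  mul_mem' := by
    rintro _ _ ⟨a, ha, b, hb, rfl⟩ ⟨c, hc, d, hd, rfl⟩
    exact ⟨a * c + b * d * s ^ 2, F.add_mem (F.mul_mem ha hc) (F.mul_mem (F.mul_mem hb hd) hs),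
      a * d + b * c, F.add_mem (F.mul_mem ha hd) (F.mul_mem hb hc), by ring⟩
  add_mem' := by
    rintro _ _ ⟨a, ha, b, hb, rfl⟩ ⟨c, hc, d, hd, rfl⟩
    exact ⟨a + c, F.add_mem ha hc, b + d, F.add_mem hb hd, by ring⟩
  algebraMap_mem' r := ⟨algebraMap k K r, F.algebraMap_mem r, 0, F.zero_mem, by ring⟩
  inv_mem' := by
    rintro _ ⟨a, ha, b, hb, rfl⟩
    have hn : a ^ 2 - b ^ 2 * s ^ 2 ∈ F :=
      F.sub_mem (pow_mem ha 2) (F.mul_mem (pow_mem hb 2) hs)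
    by_cases h0 : a + b * s = 0
    · exact ⟨0, F.zero_mem, 0, F.zero_mem, by rw [h0]; simp⟩
    by_cases h1 : a - b * s = 0
    · refine ⟨(a + a)⁻¹, F.inv_mem (F.add_mem ha ha), 0, F.zero_mem, ?_⟩
      rw [← sub_eq_zero.1 h1]; ring
    · have h2 : a ^ 2 - b ^ 2 * s ^ 2 ≠ 0 := by
        rw [show a ^ 2 - b ^ 2 * s ^ 2 = (a + b * s) * (a - b * s) by ring]
        exact mul_ne_zero h0 h1
      refine ⟨a / (a ^ 2 - b ^ 2 * s ^ 2), F.div_mem ha hn, -b / (a ^ 2 - b ^ 2 * s ^ 2),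
        F.div_mem (F.neg_mem hb) hn, ?_⟩
      field_simp
      ring

theorem le_sqrtExtension {k K : Type*} [Field k] [Field K] [Algebra k K]
    (F : IntermediateField k K) (s : K) (hs : s ^ 2 ∈ F) : F ≤ sqrtExtension F s hs :=
  fun a ha => ⟨a, ha, 0, F.zero_mem, by ring⟩

theorem self_mem_sqrtExtension {k K : Type*} [Field k] [Field K] [Algebra k K]
    (F : IntermediateField k K) (s : K) (hs : s ^ 2 ∈ F) : s ∈ sqrtExtension F s hs :=
  ⟨0, F.zero_mem, 1, F.one_mem, by ring⟩

theorem exists_common_denominator_aeval {k K τ : Type*} [Field k] [Field K] [Algebra k K]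
    {f : τ → K} {a b c d : K} (ha : a ∈ IntermediateField.adjoin k (Set.range f))
    (hb : b ∈ IntermediateField.adjoin k (Set.range f))
    (hc : c ∈ IntermediateField.adjoin k (Set.range f))
    (hd : d ∈ IntermediateField.adjoin k (Set.range f)) :
    ∃ H P Q R S : MvPolynomial τ k, MvPolynomial.aeval f H ≠ 0 ∧
      MvPolynomial.aeval f H * a = MvPolynomial.aeval f P ∧
      MvPolynomial.aeval f H * b = MvPolynomial.aeval f Q ∧
      MvPolynomial.aeval f H * c = MvPolynomial.aeval f R ∧
      MvPolynomial.aeval f H * d = MvPolynomial.aeval f S := by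
  have key : ∀ z ∈ IntermediateField.adjoin k (Set.range f), ∃ H P : MvPolynomial τ k,
      MvPolynomial.aeval f H ≠ 0 ∧ MvPolynomial.aeval f H * z = MvPolynomial.aeval f P := by
    intro z hz
    obtain ⟨r, s, rfl⟩ := (IntermediateField.mem_adjoin_range_iff k f z).1 hz
    by_cases h0 : MvPolynomial.aeval f s = 0
    · exact ⟨1, 0, by simp, by simp [h0]⟩
    · exact ⟨s, r, h0, mul_div_cancel₀ _ h0⟩
  obtain ⟨h₁, P, n₁, e₁⟩ := key a ha
  obtain ⟨h₂, Q, n₂, e₂⟩ := key b hb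
  obtain ⟨h₃, R, n₃, e₃⟩ := key c hc
  obtain ⟨h₄, S, n₄, e₄⟩ := key d hd
  refine ⟨h₁ * h₂ * h₃ * h₄, P * h₂ * h₃ * h₄, Q * h₁ * h₃ * h₄, R * h₁ * h₂ * h₄,
    S * h₁ * h₂ * h₃, by simp [*], ?_, ?_, ?_, ?_⟩
  · simp only [map_mul, ← e₁]; ring
  · simp only [map_mul, ← e₂]; ring
  · simp only [map_mul, ← e₃]; ring
  · simp only [map_mul, ← e₄]; ring

/-! ### The conic-bundle function is not a norm -/

/-- The substitution `x ↦ X`, `y ↦ m X`, where `m` is the variable of the coefficient ring. -/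
noncomputable def pencilMap (k L : Type*) [Field k] [Field L] [Algebra k[X] L] :
    MvPolynomial (Fin 2) k →+* L[X] :=
  (Polynomial.mapRingHom (algebraMap k[X] L)).comp
    (MvPolynomial.eval₂Hom ((C : k[X] →+* k[X][X]).comp C) ![X, C X * X])

theorem pencilMap_C {k L : Type*} [Field k] [Field L] [Algebra k[X] L] (c : k) :
    pencilMap k L (MvPolynomial.C c) = C (algebraMap k[X] L (C c)) := by
  simp [pencilMap]

theorem pencilMap_X_zero {k L : Type*} [Field k] [Field L] [Algebra k[X] L] :
    pencilMap k L (MvPolynomial.X 0) = X := by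
  simp [pencilMap]

theorem pencilMap_X_one {k L : Type*} [Field k] [Field L] [Algebra k[X] L] :
    pencilMap k L (MvPolynomial.X 1) = C (algebraMap k[X] L X) * X := by
  simp [pencilMap]

theorem pencilMap_injective {k K L : Type*} [Field k] [Field K] [Algebra k K] [Field L]
    [Algebra k[X] L] [IsFractionRing k[X] L] {x y : K} (hind : AlgebraicIndependent k ![x, y]) :
    Function.Injective (pencilMap k L) := by
  have hx : x ≠ 0 := hind.ne_zero 0
  have h2 : Function.Injective (Polynomial.mapRingHom (algebraMap k[X] L)) :=
    Polynomial.map_injective _ (IsFractionRing.injective _ _)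
  have h3 : Function.Injective
      (MvPolynomial.eval₂Hom ((C : k[X] →+* k[X][X]).comp C) ![X, C X * X]) := by
    have e : (Polynomial.eval₂RingHom (aeval (R := k) (y / x)).toRingHom x).comp
        (MvPolynomial.eval₂Hom ((C : k[X] →+* k[X][X]).comp C) ![X, C X * X])
        = (MvPolynomial.aeval ![x, y] : MvPolynomial (Fin 2) k →ₐ[k] K).toRingHom := by
      apply MvPolynomial.ringHom_ext
      · intro r; simp
      · intro j
        fin_cases j
        · simp
        · simp [hx]
    have hi : Function.Injective
        (MvPolynomial.aeval ![x, y] : MvPolynomial (Fin 2) k →ₐ[k] K).toRingHom := hind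
    rw [← e] at hi
    exact Function.Injective.of_comp hi
  exact h2.comp h3

/-- On the surface `t² = μ ((y² - α² x²)(y² - β² x²) + e²)` the function `y² - α² x²` is not a constant
times a norm from `k(√μ)`. Writing a norm in the basis `1, t` of `K` over `k(x, y)` and restricting to
the generic line `y = m x` would represent the quartic `t²` by the ternary form that
`quartic_not_represented` excludes. -/
theorem conic_not_norm {k K : Type*} [Field k] [CharZero k] [Field K] [Algebra k K]
    {i μ α β e ε κ D : k} (hi : i ^ 2 = -1) (hμ : ¬ IsSquare μ) (hαβ : α * β = 1)
    (hD : D = α ^ 2 - β ^ 2) (hD0 : D ≠ 0) (hε : ε ≠ 0) (he : 2 * e = ε ^ 2 * D) (hκ : κ ≠ 0)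
    {x y t : K} (hind : AlgebraicIndependent k ![x, y])
    (hgen : IntermediateField.adjoin k {x, y, t} = ⊤)
    (ht : t ∉ IntermediateField.adjoin k ({x, y} : Set K))
    (hrel : t ^ 2 = algebraMap k K μ * ((y ^ 2 - algebraMap k K α ^ 2 * x ^ 2)
      * (y ^ 2 - algebraMap k K β ^ 2 * x ^ 2) + algebraMap k K e ^ 2))
    (a b : K) (h : y ^ 2 - algebraMap k K α ^ 2 * x ^ 2
      = algebraMap k K κ * (a ^ 2 - algebraMap k K μ * b ^ 2)) : False := by
  have : CharZero K := charZero_of_injective_algebraMap (algebraMap k K).injective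
  have hα0 : α ≠ 0 := left_ne_zero_of_mul (by rw [hαβ]; exact one_ne_zero)
  obtain ⟨F, hF⟩ : ∃ F, F = IntermediateField.adjoin k ({x, y} : Set K) := ⟨_, rfl⟩
  have hFr : F = IntermediateField.adjoin k (Set.range ![x, y]) := by
    rw [hF]; congr 1; ext z; simp [eq_comm, or_comm]
  have hx : x ∈ F := hF ▸ IntermediateField.subset_adjoin _ _ (by simp)
  have hy : y ∈ F := hF ▸ IntermediateField.subset_adjoin _ _ (by simp)
  have hk : ∀ c, algebraMap k K c ∈ F := F.algebraMap_mem
  rw [← hF] at ht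
  have ht2 : t ^ 2 ∈ F := by
    rw [hrel]
    exact F.mul_mem (hk _) (F.add_mem (F.mul_mem
      (F.sub_mem (pow_mem hy _) (F.mul_mem (pow_mem (hk _) _) (pow_mem hx _)))
      (F.sub_mem (pow_mem hy _) (F.mul_mem (pow_mem (hk _) _) (pow_mem hx _))))
      (pow_mem (hk _) _))
  have htop : sqrtExtension F t ht2 = ⊤ := by
    rw [eq_top_iff, ← hgen, IntermediateField.adjoin_le_iff]
    rintro z (rfl | rfl | rfl)
    · exact le_sqrtExtension _ _ _ hx
    · exact le_sqrtExtension _ _ _ hy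
    · exact self_mem_sqrtExtension _ _ _
  obtain ⟨a₀, ha₀, a₁, ha₁, rfl⟩ : a ∈ sqrtExtension F t ht2 := htop ▸ IntermediateField.mem_top
  obtain ⟨b₀, hb₀, b₁, hb₁, rfl⟩ : b ∈ sqrtExtension F t ht2 := htop ▸ IntermediateField.mem_top
  rw [hFr] at ha₀ ha₁ hb₀ hb₁
  obtain ⟨H, A₀, A₁, B₀, B₁, hH, eA₀, eA₁, eB₀, eB₁⟩ :=
    exists_common_denominator_aeval ha₀ ha₁ hb₀ hb₁
  obtain ⟨φ, hφ⟩ : ∃ φ : MvPolynomial (Fin 2) k →ₐ[k] K, φ = MvPolynomial.aeval ![x, y] := ⟨_, rfl⟩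
  have hφi : Function.Injective φ := hφ ▸ hind
  rw [← hφ] at hH eA₀ eA₁ eB₀ eB₁
  have hφF : ∀ P, φ P ∈ F := fun P => by
    rw [hFr, IntermediateField.mem_adjoin_range_iff]
    exact ⟨P, 1, by simp [hφ]⟩
  have hφC : ∀ c, φ (MvPolynomial.C c) = algebraMap k K c := fun c => by simp [hφ]
  have hφ0 : φ (MvPolynomial.X 0) = x := by simp [hφ]
  have hφ1 : φ (MvPolynomial.X 1) = y := by simp [hφ]
  obtain ⟨q, hq⟩ : ∃ q : k → MvPolynomial (Fin 2) k, q = fun c => MvPolynomial.X 1 ^ 2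
    - MvPolynomial.C c ^ 2 * MvPolynomial.X 0 ^ 2 := ⟨_, rfl⟩
  have hφq : ∀ c, φ (q c) = y ^ 2 - algebraMap k K c ^ 2 * x ^ 2 := fun c => by
    simp only [hq, map_sub, map_mul, map_pow, hφC, hφ0, hφ1]
  obtain ⟨T, hT⟩ : ∃ T, T = MvPolynomial.C μ * (q α * q β + MvPolynomial.C e ^ 2) := ⟨_, rfl⟩
  have hφT : φ T = t ^ 2 := by
    rw [hT, hrel]; simp only [map_add, map_mul, map_pow, hφC, hφq]
  -- comparing the two coordinates with respect to the basis `1, t`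
  have hcross : A₀ * A₁ - MvPolynomial.C μ * (B₀ * B₁) = 0 := by
    by_contra hne
    have hne' : φ (A₀ * A₁ - MvPolynomial.C μ * (B₀ * B₁)) ≠ 0 := fun h0 =>
      hne (hφi (by rw [h0, map_zero]))
    apply ht
    have : t = φ (H ^ 2 * q α - MvPolynomial.C κ * ((A₀ ^ 2 - MvPolynomial.C μ * B₀ ^ 2)
        + (A₁ ^ 2 - MvPolynomial.C μ * B₁ ^ 2) * T)) /
        φ (2 * MvPolynomial.C κ * (A₀ * A₁ - MvPolynomial.C μ * (B₀ * B₁))) := by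
      rw [eq_div_iff (by
        rw [map_mul, map_mul, hφC, map_ofNat]
        refine mul_ne_zero (mul_ne_zero (by simp) (by simpa using hκ)) hne')]
      simp only [map_sub, map_mul, map_add, map_pow, hφC, hφq, hφT, map_ofNat, ← eA₀, ← eA₁, ← eB₀,
        ← eB₁]
      linear_combination -φ H ^ 2 * h
    rw [this]
    exact F.div_mem (hφF _) (hφF _)
  have hmain : H ^ 2 * q α = MvPolynomial.C κ * ((A₀ ^ 2 - MvPolynomial.C μ * B₀ ^ 2)
        + (A₁ ^ 2 - MvPolynomial.C μ * B₁ ^ 2) * T) := by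
    apply hφi
    have hc := congrArg φ hcross
    simp only [map_sub, map_mul, map_add, map_pow, hφC, hφq, hφT, ← eA₀, ← eA₁, ← eB₀, ← eB₁,
      map_zero] at hc ⊢
    linear_combination φ H ^ 2 * h + 2 * t * algebraMap k K κ * hc
  -- restriction to the generic line through the origin
  let L := FractionRing k[X]
  have hψi : Function.Injective (pencilMap k L) := pencilMap_injective hind
  have hH' : pencilMap k L H ≠ 0 := by
    intro h0
    apply hH
    rw [hψi (h0.trans (map_zero _).symm), map_zero]
  have hψq : ∀ c, pencilMap k L (q c) = C (algebraMap k[X] L (X ^ 2 - C (c ^ 2))) * X ^ 2 := by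
    intro c
    simp only [hq, map_sub, map_mul, map_pow, pencilMap_C, pencilMap_X_zero, pencilMap_X_one]
    ring
  have hψT : pencilMap k L T = C (algebraMap k[X] L (C μ)) * (C (algebraMap k[X] L
      ((X ^ 2 - C (α ^ 2)) * (X ^ 2 - C (β ^ 2)))) * X ^ 4 + C (algebraMap k[X] L (C e) ^ 2)) := by
    rw [hT, map_mul, map_add, map_mul _ (q α), hψq, hψq, map_pow (pencilMap k L),
      pencilMap_C, pencilMap_C]
    simp only [map_mul, map_pow]
    ring
  have han := fun a b d : L => ternary_anisotropic (κ := κ⁻¹) hμ hα0 (inv_ne_zero hκ) a b d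
  obtain ⟨c, hc⟩ : ∃ c, c = algebraMap k[X] L (C κ⁻¹ * (X ^ 2 - C (α ^ 2))) := ⟨_, rfl⟩
  have hψq' : pencilMap k L (q α) = C (algebraMap k[X] L (C κ)) * C c * X ^ 2 := by
    have hkk : (C κ : k[X]) * C κ⁻¹ = 1 := by rw [← C_mul, mul_inv_cancel₀ hκ, C_1]
    rw [hψq, hc, ← C_mul, ← map_mul, ← mul_assoc (C κ), hkk, one_mul]
  have hκ' : C (algebraMap k[X] L (C κ)) ≠ 0 := by
    simpa using hκ
  have hc0 : c ≠ 0 := by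
    rintro rfl
    have := (han 0 1 0 (by rw [← hc]; simp [ternary])).2.1
    exact one_ne_zero this
  rw [← hc] at han
  have E1 := congrArg (pencilMap k L) hcross
  have E2 := congrArg (pencilMap k L) hmain
  simp only [map_sub, map_add, map_mul (pencilMap k L), map_pow (pencilMap k L), pencilMap_C, hψq',
    map_zero] at E1 E2
  generalize pencilMap k L A₀ = P₀ at E1 E2
  generalize pencilMap k L A₁ = P₁ at E1 E2
  generalize pencilMap k L B₀ = Q₀ at E1 E2
  generalize pencilMap k L B₁ = Q₁ at E1 E2
  generalize pencilMap k L H = H' at E1 E2 hH'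
  obtain ⟨m, hm⟩ : ∃ m, m = C (algebraMap k[X] L (C μ)) := ⟨_, rfl⟩
  rw [← hm] at E1 E2
  have E3 : H' ^ 2 * (C c * X ^ 2) = (P₀ ^ 2 - m * Q₀ ^ 2) + (P₁ ^ 2 - m * Q₁ ^ 2) * pencilMap k L T := by
    apply mul_left_cancel₀ hκ'
    rw [← E2]; ring
  by_cases hN : P₁ ^ 2 - m * Q₁ ^ 2 = 0
  · rw [hN, zero_mul, add_zero] at E3
    obtain ⟨h1, -, -⟩ := ternary_eq_zero han (P := C c * X * H') (Q := m * Q₀) (R := P₀) (by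
      rw [← hm, ternary]
      linear_combination m * C c * E3)
    exact mul_ne_zero (mul_ne_zero (by simpa using hc0) X_ne_zero) hH' h1
  · refine quartic_not_represented hi hμ hαβ hD hD0 hε he (inv_ne_zero hκ)
      (P₁ ^ 2 - m * Q₁ ^ 2) (Q₀ * P₁ - P₀ * Q₁) (X * H' * P₁) (X * H' * Q₁) hN ?_
    rw [← hψT, ← hm, ← hc, ternary]
    linear_combination -(P₁ ^ 2 - m * Q₁ ^ 2) * E3 - (P₀ * P₁ - m * Q₀ * Q₁) * E1

/-! ### The surface is not rational -/

theorem quadric_ne_zero {k K : Type*} [Field k] [Field K] [Algebra k K] {x y : K}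
    (hind : AlgebraicIndependent k ![x, y]) (c : k) : y ^ 2 - algebraMap k K c * x ^ 2 ≠ 0 := by
  intro h
  have := (algebraicIndependent_iff_injective_aeval.1 hind)
    (a₁ := MvPolynomial.X 1 ^ 2 - MvPolynomial.C c * MvPolynomial.X 0 ^ 2) (a₂ := 0) (by simpa using h)
  have h2 := congrArg (MvPolynomial.eval ![0, 1]) this
  simp at h2

/-- With `α = (i u - v) / w`, `β = (-i u - v) / w`, so that `α β = 1`, and `e = u v μ⁴`, the equation
of the surface becomes `(t / w)² = μ ((y² - α² x²)(y² - β² x²) + e²)`. -/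
theorem not_isKRational_quartic {k K : Type*} [Field k] [CharZero k] [Field K] [Algebra k K]
    {i μ u v w : k} (hi : i ^ 2 = -1) (hμ : ¬ IsSquare μ) (hu : u ≠ 0) (hv : v ≠ 0) (hw : w ≠ 0)
    (huvw : w ^ 2 = u ^ 2 + v ^ 2) {x y t : K} (hind : AlgebraicIndependent k ![x, y])
    (hrel : t ^ 2 = algebraMap k K (w ^ 2 * μ) * x ^ 4
      + 2 * algebraMap k K ((u ^ 2 - v ^ 2) * μ) * x ^ 2 * y ^ 2
      + algebraMap k K (w ^ 2 * μ) * y ^ 4 + algebraMap k K (u ^ 2 * v ^ 2 * w ^ 2 * μ ^ 9))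
    (hgen : IntermediateField.adjoin k {x, y, t} = ⊤)
    (ht : t ∉ IntermediateField.adjoin k ({x, y} : Set K)) : ¬ IsKRational k K := by
  rintro ⟨σ⟩
  have hμ0 : μ ≠ 0 := by rintro rfl; exact hμ ⟨0, by simp⟩
  have hi0 : i ≠ 0 := by rintro rfl; simp at hi
  have hw' : algebraMap k K w ≠ 0 := by simpa using hw
  obtain ⟨α, hα⟩ : ∃ α, α = (i * u - v) / w := ⟨_, rfl⟩
  obtain ⟨β, hβ⟩ : ∃ β, β = (-i * u - v) / w := ⟨_, rfl⟩
  obtain ⟨e, he⟩ : ∃ e, e = u * v * μ ^ 4 := ⟨_, rfl⟩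
  obtain ⟨ε, hε⟩ : ∃ ε, ε = (1 + i) * μ ^ 2 * w / 2 := ⟨_, rfl⟩
  obtain ⟨D, hD⟩ : ∃ D, D = α ^ 2 - β ^ 2 := ⟨_, rfl⟩
  have hαw : α * w = i * u - v := by rw [hα]; field_simp
  have hβw : β * w = -i * u - v := by rw [hβ]; field_simp
  have hw2 : w ^ 2 ≠ 0 := pow_ne_zero 2 hw
  have hαβ : α * β = 1 := by
    apply mul_right_cancel₀ hw2
    linear_combination β * w * hαw + (i * u - v) * hβw - u ^ 2 * hi - huvw
  have hD' : D * w ^ 2 = -4 * i * u * v := by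
    rw [hD]
    linear_combination (α * w + i * u - v) * hαw - (β * w - i * u - v) * hβw
  have hD0 : D ≠ 0 := by
    rintro rfl
    rw [zero_mul] at hD'
    exact mul_ne_zero (mul_ne_zero (mul_ne_zero (by norm_num) hi0) hu) hv hD'.symm
  have hε0 : ε ≠ 0 := by
    have : (1 + i) ≠ 0 := by
      intro h
      have : (2 : k) = 0 := by linear_combination hi - (i - 1) * h
      exact two_ne_zero this
    rw [hε]
    simp [*]
  have heε : 2 * e = ε ^ 2 * D := by
    have h2 : 4 * ε ^ 2 = (1 + i) ^ 2 * μ ^ 4 * w ^ 2 := by rw [hε]; ring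
    have h4 : (4 : k) ≠ 0 := by norm_num
    apply mul_left_cancel₀ h4
    rw [he]
    linear_combination -D * h2 - (1 + i) ^ 2 * μ ^ 4 * hD' + 4 * u * v * μ ^ 4 * (i + 2) * hi
  have hs : (α ^ 2 + β ^ 2) * w ^ 2 = -2 * (u ^ 2 - v ^ 2) := by
    linear_combination (α * w + i * u - v) * hαw + (β * w - i * u - v) * hβw + 2 * u ^ 2 * hi
  obtain ⟨t₀, ht₀⟩ : ∃ t₀, t₀ = t / algebraMap k K w := ⟨_, rfl⟩
  have htt : t = algebraMap k K w * t₀ := by rw [ht₀]; field_simp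
  have hgen₀ : IntermediateField.adjoin k {x, y, t₀} = ⊤ := by
    rw [eq_top_iff, ← hgen, IntermediateField.adjoin_le_iff]
    rintro z (rfl | rfl | rfl)
    · exact IntermediateField.subset_adjoin _ _ (by simp)
    · exact IntermediateField.subset_adjoin _ _ (by simp)
    · rw [htt]
      exact mul_mem (IntermediateField.algebraMap_mem _ _)
        (IntermediateField.subset_adjoin _ _ (by simp))
  have ht₀' : t₀ ∉ IntermediateField.adjoin k ({x, y} : Set K) := fun h =>
    ht (htt ▸ mul_mem (IntermediateField.algebraMap_mem _ _) h)
  have hrel₀ : t₀ ^ 2 = algebraMap k K μ * ((y ^ 2 - algebraMap k K α ^ 2 * x ^ 2)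
      * (y ^ 2 - algebraMap k K β ^ 2 * x ^ 2) + algebraMap k K e ^ 2) := by
    have e1 := congrArg (algebraMap k K) hαβ
    have e2 := congrArg (algebraMap k K) hs
    rw [htt] at hrel
    rw [he]
    simp only [map_mul, map_pow, map_add, map_sub, map_neg, map_ofNat, map_one] at e1 e2 hrel ⊢
    apply mul_left_cancel₀ (pow_ne_zero 2 hw')
    generalize algebraMap k K w = w' at *
    generalize algebraMap k K μ = m at *
    generalize algebraMap k K α = a at *
    generalize algebraMap k K β = b at *
    linear_combination hrel + m * x ^ 2 * y ^ 2 * e2 - m * w' ^ 2 * x ^ 4 * (a * b + 1) * e1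
  have hne : ∀ c : k, y ^ 2 - algebraMap k K c ^ 2 * x ^ 2 ≠ 0 := fun c => by
    rw [← map_pow]; exact quadric_ne_zero hind _
  have hσ : ∀ c : k, σ (y ^ 2 - algebraMap k K c ^ 2 * x ^ 2)
      = σ y ^ 2 - algebraMap k (FractionRing (MvPolynomial (Fin 2) k)) c ^ 2 * σ x ^ 2 := fun c => by
    simp only [map_sub, map_mul, map_pow, AlgEquiv.commutes]
  have hσ0 : ∀ c : k, σ y ^ 2 - algebraMap k (FractionRing (MvPolynomial (Fin 2) k)) c ^ 2 * σ x ^ 2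
      ≠ 0 := fun c => by
    rw [← hσ]
    exact fun h => hne c (σ.injective (h.trans (map_zero σ).symm))
  obtain ⟨κ, hκ, a, b, hab⟩ := exists_norm_of_polynomial_fractions (τ := Fin 2) (α := α) (β := β) (e := e)
    hμ
    (fun h => hD0 (by rw [hD, h, sub_self])) (σ x) (σ y) (σ t₀)
    (by rw [← hσ, ← hσ, ← map_pow, hrel₀]; simp only [map_mul, map_add, map_pow, AlgEquiv.commutes])
    (hσ0 α) (hσ0 β)
  refine conic_not_norm hi hμ hαβ hD hD0 hε0 heε hκ hind hgen₀ ht₀' hrel₀ (σ.symm a) (σ.symm b) ?_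
  apply σ.injective
  rw [hσ, hab]
  simp only [map_sub, map_mul, map_pow, AlgEquiv.commutes, AlgEquiv.apply_symm_apply]

/-! ### The quotient is rational -/

/-- Every element of `K = F(x, y)` with `x², y² ∈ F` is `f₀ + f₁ x + f₂ y + f₃ x y` over `F`. -/
theorem exists_biquadratic_form {k K : Type*} [Field k] [Field K] [Algebra k K]
    {x y t : K} (hgen : IntermediateField.adjoin k {x, y, t} = ⊤) (F : IntermediateField k K)
    (hx : x ^ 2 ∈ F) (hy : y ^ 2 ∈ F) {τ : K} (hτ : τ ∈ F) (hy0 : y ≠ 0) (ht : t = τ * x / y)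
    (z : K) : ∃ f₀ ∈ F, ∃ f₁ ∈ F, ∃ f₂ ∈ F, ∃ f₃ ∈ F, z = (f₀ + f₁ * x) + (f₂ + f₃ * x) * y := by
  have hy' : y ^ 2 ∈ sqrtExtension F x hx := le_sqrtExtension F x hx hy
  have hle := le_sqrtExtension (sqrtExtension F x hx) y hy'
  have hxm := hle (self_mem_sqrtExtension F x hx)
  have hym := self_mem_sqrtExtension (sqrtExtension F x hx) y hy'
  have hz : z ∈ sqrtExtension (sqrtExtension F x hx) y hy' := by
    have : (⊤ : IntermediateField k K) ≤ sqrtExtension (sqrtExtension F x hx) y hy' := by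
      rw [← hgen, IntermediateField.adjoin_le_iff]
      rintro s (rfl | rfl | rfl)
      · exact hxm
      · exact hym
      · rw [ht]
        exact div_mem (mul_mem (hle (le_sqrtExtension F x hx hτ)) hxm) hym
    exact this trivial
  obtain ⟨_, ⟨f₀, h₀, f₁, h₁, rfl⟩, _, ⟨f₂, h₂, f₃, h₃, rfl⟩, rfl⟩ := hz
  exact ⟨f₀, h₀, f₁, h₁, f₂, h₂, f₃, h₃, rfl⟩

/-- The relation `q² a n² = b t²`, expressed through
`n, p, q` and divided by `n²`, is linear in `n` with nonzero leading coefficient, so it determines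
`n` rationally in `p` and `q`. -/
theorem parameters_recover {k K : Type*} [Field k] [Field K] [CharZero K] [Algebra k K]
    {m W V η a b n p q : K} (hm : m ≠ 0) (hW : W ≠ 0) (hη : η ≠ 0) (hb : b ≠ 0) (hn0 : n ≠ 0)
    (hab : a - b + η ≠ 0) (hn : n = a + b + η) (hp : p * n = a - b + η)
    (hq : (q * n) ^ 2 * a = b * (m * (W ^ 2 * (n * (n - 2 * η)) - 4 * V ^ 2 * a * b)))
    (F : IntermediateField k K) (hpF : p ∈ F) (hqF : q ∈ F) (hmF : m ∈ F) (hWF : W ∈ F)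
    (hVF : V ∈ F) (hηF : η ∈ F) : n ∈ F := by
  have hb' : 2 * b = n * (1 - p) := by linear_combination -hn + hp
  have ha' : 2 * a = n * (1 + p) - 2 * η := by linear_combination -hn - hp
  have key : n * (q ^ 2 * (1 + p) - m * (1 - p) * (W ^ 2 - V ^ 2 * (1 - p) * (1 + p)))
      = 2 * (q ^ 2 * η) + m * (1 - p) * (-2 * η * W ^ 2 + 2 * V ^ 2 * η * (1 - p)) := by
    apply mul_left_cancel₀ (pow_ne_zero 2 hn0)
    have e1 : b = n * (1 - p) / 2 := by rw [← hb']; ring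
    have e2 : a = (n * (1 + p) - 2 * η) / 2 := by rw [← ha']; ring
    rw [e1, e2] at hq
    linear_combination 2 * hq
  have hc : q ^ 2 * (1 + p) - m * (1 - p) * (W ^ 2 - V ^ 2 * (1 - p) * (1 + p)) ≠ 0 := by
    intro h
    rw [h, mul_zero] at key
    have h1 : q ^ 2 = m * (1 - p) * (W ^ 2 - V ^ 2 * (1 - p)) := by
      apply mul_left_cancel₀ (mul_ne_zero two_ne_zero hη)
      linear_combination -key
    have h2 : m * (1 - p) * (W ^ 2 * p) = 0 := by
      rw [h1] at h; linear_combination h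
    rcases mul_eq_zero.1 h2 with h3 | h3
    · rcases mul_eq_zero.1 h3 with h4 | h4
      · exact hm h4
      · rw [h4, mul_zero] at hb'
        exact mul_ne_zero two_ne_zero hb hb'
    · rcases mul_eq_zero.1 h3 with h4 | h4
      · exact pow_ne_zero 2 hW h4
      · rw [h4, zero_mul] at hp
        exact hab hp.symm
  have h2F : (2 : K) ∈ F := by simp
  have h1p : 1 - p ∈ F := sub_mem (one_mem _) hpF
  have h1p' : 1 + p ∈ F := add_mem (one_mem _) hpF
  rw [eq_div_of_mul_eq hc key]
  refine div_mem (add_mem (mul_mem h2F (mul_mem (pow_mem hqF 2) hηF)) (mul_mem (mul_mem hmF h1p)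
    (add_mem (mul_mem (mul_mem (neg_mem h2F) hηF) (pow_mem hWF 2))
      (mul_mem (mul_mem (mul_mem h2F (pow_mem hVF 2)) hηF) h1p))))
    (sub_mem (mul_mem (pow_mem hqF 2) h1p') (mul_mem (mul_mem hmF h1p)
      (sub_mem (pow_mem hWF 2) (mul_mem (mul_mem (pow_mem hVF 2) h1p) h1p'))))

/-- If `K` is algebraic over `k(p, q)` then `p, q` are algebraically
independent, since `K` has transcendence degree at least two. -/
theorem algebraicIndependent_of_isAlgebraic {k K : Type*} [Field k] [Field K] [Algebra k K]
    {x y p q : K} (hind : AlgebraicIndependent k ![x, y])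
    (halg : Algebra.IsAlgebraic (IntermediateField.adjoin k (Set.range ![p, q])) K) :
    AlgebraicIndependent k ![p, q] := by
  have : Algebra.IsAlgebraic (Algebra.adjoin k (Set.range ![p, q])) K := by
    refine ⟨fun z => IntermediateField.isAlgebraic_adjoin_iff.1 (halg.isAlgebraic z)⟩
  exact (Algebra.IsAlgebraic.isTranscendenceBasis_of_lift_le_trdeg_of_finite k ![p, q]
    hind.lift_cardinalMk_le_trdeg).1

theorem affine_form_ne_zero {k K : Type*} [Field k] [Field K] [Algebra k K] {x y : K}
    (hind : AlgebraicIndependent k ![x, y]) (c d : k) (hd : d ≠ 0) :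
    x ^ 2 + algebraMap k K c * y ^ 2 + algebraMap k K d ≠ 0 := by
  intro h
  have := (algebraicIndependent_iff_injective_aeval.1 hind)
    (a₁ := MvPolynomial.X 0 ^ 2 + MvPolynomial.C c * MvPolynomial.X 1 ^ 2 + MvPolynomial.C d)
    (a₂ := 0) (by simpa [MvPolynomial.aeval_C] using h)
  have h2 := congrArg (MvPolynomial.eval ![0, 0]) this
  simp at h2
  exact hd h2

/-- With `η = i u v μ⁴` and `n = x² + y² + η`, the fixed field is generated by the algebraically
independent elements `p = (x² - y² + η) / n` and `q = (y t / x) / n`. -/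
theorem isKRational_fixedField {k K : Type*} [Field k] [CharZero k] [Field K] [Algebra k K]
    {i μ u v w : k} (hi : i ^ 2 = -1) (hμ0 : μ ≠ 0) (hu : u ≠ 0) (hv : v ≠ 0) (hw : w ≠ 0)
    (huvw : w ^ 2 = u ^ 2 + v ^ 2) {x y t : K} (hind : AlgebraicIndependent k ![x, y])
    (hrel : t ^ 2 = algebraMap k K (w ^ 2 * μ) * x ^ 4
      + 2 * algebraMap k K ((u ^ 2 - v ^ 2) * μ) * x ^ 2 * y ^ 2
      + algebraMap k K (w ^ 2 * μ) * y ^ 4 + algebraMap k K (u ^ 2 * v ^ 2 * w ^ 2 * μ ^ 9))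
    (hgen : IntermediateField.adjoin k {x, y, t} = ⊤) {g₁ g₂ : K ≃ₐ[k] K}
    (hg1x : g₁ x = -x) (hg1y : g₁ y = y) (hg1t : g₁ t = -t)
    (hg2x : g₂ x = x) (hg2y : g₂ y = -y) (hg2t : g₂ t = -t) :
    IsKRational k (IntermediateField.fixedField (Subgroup.closure {g₁, g₂})) := by
  have : CharZero K := charZero_of_injective_algebraMap (algebraMap k K).injective
  have hi0 : i ≠ 0 := by rintro rfl; simp at hi
  obtain ⟨e, he⟩ : ∃ e, e = i * u * v * μ ^ 4 := ⟨_, rfl⟩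
  have he0 : e ≠ 0 := by rw [he]; simp [*]
  have hx0 : x ≠ 0 := hind.ne_zero 0
  have hy0 : y ≠ 0 := hind.ne_zero 1
  obtain ⟨η, hη⟩ : ∃ η, η = algebraMap k K e := ⟨_, rfl⟩
  have hη0 : η ≠ 0 := by rw [hη]; simpa using he0
  obtain ⟨n, hn⟩ : ∃ n, n = x ^ 2 + y ^ 2 + η := ⟨_, rfl⟩
  have hn0 : n ≠ 0 := by
    have := affine_form_ne_zero hind 1 e he0
    rwa [map_one, one_mul, ← hη, ← hn] at this
  have hab : x ^ 2 - y ^ 2 + η ≠ 0 := by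
    have := affine_form_ne_zero hind (-1) e he0
    rwa [map_neg, map_one, neg_one_mul, ← hη, ← sub_eq_add_neg] at this
  obtain ⟨τ, hτ⟩ : ∃ τ, τ = y * t / x := ⟨_, rfl⟩
  obtain ⟨p, hp⟩ : ∃ p, p = (x ^ 2 - y ^ 2 + η) / n := ⟨_, rfl⟩
  obtain ⟨q, hq⟩ : ∃ q, q = τ / n := ⟨_, rfl⟩
  have hpn : p * n = x ^ 2 - y ^ 2 + η := by rw [hp]; field_simp
  have hqn : q * n = τ := by rw [hq]; field_simp
  have htx : τ * x = y * t := by rw [hτ]; field_simp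
  have htτ : t = τ * x / y := by rw [htx]; field_simp
  obtain ⟨F, hF⟩ : ∃ F, F = IntermediateField.adjoin k (Set.range ![p, q]) := ⟨_, rfl⟩
  have hpF : p ∈ F := hF ▸ IntermediateField.subset_adjoin _ _ ⟨0, rfl⟩
  have hqF : q ∈ F := hF ▸ IntermediateField.subset_adjoin _ _ ⟨1, rfl⟩
  have hηF : η ∈ F := hη ▸ F.algebraMap_mem _
  have hη2 : η ^ 2 = -algebraMap k K (u ^ 2 * v ^ 2 * μ ^ 8) := by
    rw [hη, he, ← map_pow, ← map_neg]
    congr 1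
    linear_combination u ^ 2 * v ^ 2 * μ ^ 8 * hi
  have hnF : n ∈ F := by
    refine parameters_recover (m := algebraMap k K μ) (W := algebraMap k K w)
      (V := algebraMap k K v) (a := x ^ 2) (b := y ^ 2) (by simpa using hμ0) (by simpa using hw)
      hη0 (pow_ne_zero 2 hy0) hn0 hab hn hpn ?_ F hpF hqF (F.algebraMap_mem _) (F.algebraMap_mem _)
      (F.algebraMap_mem _) hηF
    rw [hqn, hn, ← mul_pow, htx, mul_pow, hrel]
    have e1 := congrArg (algebraMap k K) huvw
    simp only [map_mul, map_pow, map_sub, map_add] at hη2 e1 ⊢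
    generalize algebraMap k K w = w' at *
    generalize algebraMap k K μ = m at *
    generalize algebraMap k K u = u' at *
    generalize algebraMap k K v = v' at *
    linear_combination m * w' ^ 2 * y ^ 2 * hη2 - 2 * m * x ^ 2 * y ^ 4 * e1
  have h2F : (2 : K) ∈ F := by simp
  have hyF : y ^ 2 ∈ F := by
    have : y ^ 2 = n * (1 - p) / 2 := by
      rw [mul_sub, mul_comm n p, hpn, hn]; ring
    rw [this]
    exact div_mem (mul_mem hnF (sub_mem (one_mem _) hpF)) h2F
  have hxF : x ^ 2 ∈ F := by
    have : x ^ 2 = n - y ^ 2 - η := by rw [hn]; ring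
    rw [this]
    exact sub_mem (sub_mem hnF hyF) hηF
  have hτF : τ ∈ F := hqn ▸ mul_mem hqF hnF
  have hform := exists_biquadratic_form hgen F hxF hyF hτF hy0 htτ
  have hle : F ≤ IntermediateField.fixedField (Subgroup.closure {g₁, g₂}) := by
    rw [IntermediateField.le_iff_le, Subgroup.closure_le]
    have hηg : ∀ g : K ≃ₐ[k] K, g η = η := fun g => by rw [hη, AlgEquiv.commutes]
    have hfix : ∀ g : K ≃ₐ[k] K, g p = p → g q = q → g ∈ F.fixingSubgroup := by
      intro g h1 h2
      rw [IntermediateField.mem_fixingSubgroup_iff]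
      intro z hz
      have := (IntermediateField.forall_mem_adjoin_smul_eq_self_iff k (S := Set.range ![p, q]) g).2
        (by rintro _ ⟨j, rfl⟩; fin_cases j <;> simpa)
      rw [hF] at hz
      exact this z hz
    rintro g (rfl | rfl)
    · exact hfix _ (by rw [hp, hn]; simp [hg1x, hg1y, hηg])
        (by rw [hq, hτ, hn]; simp [hg1x, hg1y, hg1t, hηg])
    · exact hfix _ (by rw [hp, hn]; simp [hg2x, hg2y, hηg])
        (by rw [hq, hτ, hn]; simp [hg2x, hg2y, hg2t, hηg])
  have hge : IntermediateField.fixedField (Subgroup.closure {g₁, g₂}) ≤ F := by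
    intro z hz
    have hz' := IntermediateField.mem_fixedField_iff _ _ |>.1 hz
    have h1 : g₁ z = z := hz' g₁ (Subgroup.subset_closure (by simp))
    have h2 : g₂ z = z := hz' g₂ (Subgroup.subset_closure (by simp))
    obtain ⟨f₀, h₀, f₁, h₁, f₂, h₂, f₃, h₃, rfl⟩ := hform z
    have hg : ∀ g : K ≃ₐ[k] K, g ∈ Subgroup.closure {g₁, g₂} → ∀ f ∈ F, g f = f :=
      fun g hg f hf => IntermediateField.mem_fixedField_iff _ _ |>.1 (hle hf) g hg
    have hm1 := hg g₁ (Subgroup.subset_closure (by simp))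
    have hm2 := hg g₂ (Subgroup.subset_closure (by simp))
    simp only [map_add, map_mul, hm1 _ h₀, hm1 _ h₁, hm1 _ h₂, hm1 _ h₃, hg1x, hg1y] at h1
    simp only [map_add, map_mul, hm2 _ h₀, hm2 _ h₁, hm2 _ h₂, hm2 _ h₃, hg2x, hg2y] at h2
    -- `g₁` kills the coefficients of `x` and `xy`, and `g₂` those of `y` and `xy`.
    have e1 : f₁ * x + f₃ * x * y = 0 := by
      apply mul_left_cancel₀ (two_ne_zero (α := K))
      linear_combination -h1
    have e2 : (f₂ + f₃ * x) * y = 0 := by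
      apply mul_left_cancel₀ (two_ne_zero (α := K))
      linear_combination -h2
    have e3 : f₂ + f₃ * x = 0 := (mul_eq_zero.1 e2).resolve_right hy0
    have e4 : f₂ - f₃ * x = 0 := by
      have := congrArg g₁ e3
      simp only [map_add, map_mul, hm1 _ h₂, hm1 _ h₃, hg1x, map_zero] at this
      linear_combination this
    have e5 : f₃ * x = 0 := by
      apply mul_left_cancel₀ (two_ne_zero (α := K))
      linear_combination e3 - e4
    have : (f₀ + f₁ * x) + (f₂ + f₃ * x) * y = f₀ := by
      linear_combination e1 + e2 - y * e5
    rw [this]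
    exact h₀
  have halg : Algebra.IsAlgebraic F K := by
    have hsq : ∀ s : K, s ^ 2 ∈ F → IsAlgebraic F s := fun s hs =>
      .of_pow two_pos (isAlgebraic_algebraMap (⟨s ^ 2, hs⟩ : F))
    refine ⟨fun z => ?_⟩
    obtain ⟨f₀, h₀, f₁, h₁, f₂, h₂, f₃, h₃, rfl⟩ := hform z
    have hF' : ∀ f ∈ F, IsAlgebraic F f := fun f hf => isAlgebraic_algebraMap (⟨f, hf⟩ : F)
    exact ((hF' _ h₀).add ((hF' _ h₁).mul (hsq x hxF))).add
      (((hF' _ h₂).add ((hF' _ h₃).mul (hsq x hxF))).mul (hsq y hyF))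
  rw [← le_antisymm hle hge]
  subst hF
  exact ⟨(algebraicIndependent_of_isAlgebraic hind halg).aevalEquivField.symm⟩

end

/-- With `C = u²v²w²μ⁹` and `g₁, g₂` the involutions `g₁ : (x,y,t) ↦ (−x,y,−t)` and
`g₂ : (x,y,t) ↦ (x,−y,−t)`, so that `⟨g₁, g₂⟩ ≅ C₂ × C₂`, the fixed field of `⟨g₁, g₂⟩`
acting on `K_C` is `k`-rational, although `K_C` itself is not `k`-rational. -/
theorem delPezzo2_quartic_quotient_C2C2_rational'
    (k : Type*) [Field k] [CharZero k]
    (i : k) (hi : i ^ 2 = -1)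
    (μ : k) (hμ : ¬ IsSquare μ)
    (u v w : k) (hu : u ≠ 0) (hv : v ≠ 0) (hw : w ≠ 0)
    (huvw : w ^ 2 = u ^ 2 + v ^ 2)
    (A B C : k)
    (hA : A = w ^ 2 * μ) (hB : B = (u ^ 2 - v ^ 2) * μ)
    (hC : C = u ^ 2 * v ^ 2 * w ^ 2 * μ ^ 9)
    -- K is the function field of the surface: K = k(x, y, t) with t² = f_C(x, y)
    (K : Type*) [Field K] [Algebra k K]
    (x y t : K)
    (hind : AlgebraicIndependent k ![x, y])
    (hrel : t ^ 2 = algebraMap k K A * x ^ 4 + 2 * algebraMap k K B * x ^ 2 * y ^ 2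
        + algebraMap k K A * y ^ 4 + algebraMap k K C)
    (hgen : IntermediateField.adjoin k {x, y, t} = ⊤)
    (ht : t ∉ IntermediateField.adjoin k ({x, y} : Set K))
    -- g₁, g₂ are the k-automorphisms of order 2 with
    -- g₁(x) = −x, g₁(y) = y, g₁(t) = −t and g₂(x) = x, g₂(y) = −y, g₂(t) = −t
    (g₁ g₂ : K ≃ₐ[k] K)
    (hg1x : g₁ x = -x) (hg1y : g₁ y = y) (hg1t : g₁ t = -t)
    (hg2x : g₂ x = x) (hg2y : g₂ y = -y) (hg2t : g₂ t = -t) :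
    IsKRational k (IntermediateField.fixedField (Subgroup.closure {g₁, g₂})) ∧
      ¬ IsKRational k K := by
  subst hA hB hC
  have hμ0 : μ ≠ 0 := by rintro rfl; exact hμ ⟨0, by simp⟩
  exact ⟨isKRational_fixedField hi hμ0 hu hv hw huvw hind hrel hgen hg1x hg1y hg1t hg2x hg2y hg2t,
    not_isKRational_quartic hi hμ hu hv hw huvw hind hrel hgen ht⟩
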